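/- Let 1 < p < ∞ and p* = p/(p−1). Assume (X, d, μ) is complete, μ is Borel-regular and doubling, and X supports a weak 1-Poincaré inequality. Let G ⊂ X be a domain with compact closure and E, F ⊂ G disjoint continua each containing at least two points. If mod_p Γ(E, F; G) = 0, then mod_{p*} Γ*(E, F; G) = ∞. -/

import Mathlib

open MeasureTheory Metric Set ENNReal NNReal Filter Topology

noncomputable section

variable {X : Type*}

/-- A measure is Borel-regular: every set is contained in a Borel set of the same measure. -/
def BorelRegular [MeasurableSpace X] (μ : Measure X) : Prop :=
  ∀ s : Set X, ∃ t : Set X, MeasurableSet t ∧ s ⊆ t ∧ μ t = μ s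

/-- μ is doubling with constant `Cμ`: `0 < μ(2B) ≤ Cμ μ(B) < ∞` for all balls. -/
def IsDoublingWith [PseudoMetricSpace X] [MeasurableSpace X] (μ : Measure X) (Cμ : ℝ) : Prop :=
  ∀ (x : X) (r : ℝ), 0 < r →
    0 < μ (ball x (2 * r)) ∧ μ (ball x (2 * r)) ≤ ENNReal.ofReal Cμ * μ (ball x r) ∧
      μ (ball x r) < ⊤

/-- `ρ` is an upper gradient of `u` on the set `V`: for every `L ≥ 0` and every
1-Lipschitz curve `γ : [0, L] → V`, `|u(γ L) − u(γ 0)| ≤ ∫₀^L ρ(γ t) dt`. -/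
def IsUpperGradientOn [PseudoMetricSpace X] (u : X → ℝ) (ρ : X → ℝ≥0∞) (V : Set X) : Prop :=
  ∀ L : ℝ, 0 ≤ L → ∀ γ : ℝ → X, LipschitzOnWith 1 γ (Icc 0 L) → MapsTo γ (Icc 0 L) V →
    ENNReal.ofReal |u (γ L) - u (γ 0)| ≤ ∫⁻ t in Icc 0 L, ρ (γ t)

/-- `X` supports a weak `p`-Poincaré inequality with constants `CP`, `lP`. -/
def WeakPoincare [PseudoMetricSpace X] [MeasurableSpace X] (μ : Measure X)
    (p CP lP : ℝ) : Prop :=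
  ∀ u : X → ℝ, LocallyIntegrable u μ →
    ∀ ρ : X → ℝ≥0∞, Measurable ρ → IsUpperGradientOn u ρ univ →
    ∀ (x : X) (r : ℝ), 0 < r →
      ENNReal.ofReal (⨍ y in ball x r, |u y - ⨍ z in ball x r, u z ∂μ| ∂μ) ≤
        ENNReal.ofReal (CP * diam (ball x r)) *
          (⨍⁻ y in ball x (lP * r), ρ y ^ p ∂μ) ^ (1 / p)

/-- `X` is Ahlfors `Q`-regular with constants `0 < a ≤ A`. -/
def AhlforsRegular [PseudoMetricSpace X] [MeasurableSpace X] (μ : Measure X)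
    (Q a A : ℝ) : Prop :=
  0 < a ∧ a ≤ A ∧ ∀ (x : X) (r : ℝ), 0 < r → ENNReal.ofReal r < EMetric.diam (univ : Set X) →
    ENNReal.ofReal (a * r ^ Q) ≤ μ (ball x r) ∧ μ (ball x r) ≤ ENNReal.ofReal (A * r ^ Q)

/-- `ρ` is admissible for a family `M` of Borel measures: `∫ ρ dν ≥ 1` for all `ν ∈ M`. -/
def Admissible [MeasurableSpace X] (M : Set (Measure X)) (ρ : X → ℝ≥0∞) : Prop :=
  Measurable ρ ∧ ∀ ν ∈ M, 1 ≤ ∫⁻ x, ρ x ∂ν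

/-- The `q`-modulus of a family of Borel measures. -/
def modulus [MeasurableSpace X] (μ : Measure X) (q : ℝ) (M : Set (Measure X)) : ℝ≥0∞ :=
  ⨅ (ρ : X → ℝ≥0∞) (_ : Admissible M ρ), ∫⁻ x, ρ x ^ q ∂μ

/-- `ρ` is `q`-weakly admissible for `M`. -/
def WeaklyAdmissible [MeasurableSpace X] (μ : Measure X) (q : ℝ) (M : Set (Measure X))
    (ρ : X → ℝ≥0∞) : Prop :=
  ∃ N ⊆ M, modulus μ q N = 0 ∧ Admissible (M \ N) ρ

/-- The family `Γ(E, F; G)` of measures `H¹` restricted to images of injective rectifiable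
curves joining `E` and `F` in `G`. -/
def pathFamily [MetricSpace X] [MeasurableSpace X] [BorelSpace X] (E F G : Set X) :
    Set (Measure X) :=
  {ν | ∃ γ : ℝ → X, ContinuousOn γ (Icc 0 1) ∧ InjOn γ (Icc 0 1) ∧
    eVariationOn γ (Icc 0 1) ≠ ⊤ ∧ MapsTo γ (Icc 0 1) G ∧ γ 0 ∈ E ∧ γ 1 ∈ F ∧
    ν = (μH[1]).restrict (γ '' Icc 0 1)}

/-- `S` separates `E` from `F` in `G`: they lie in different connected components of `G \ S`. -/
def SeparatesIn [TopologicalSpace X] (S E F G : Set X) : Prop :=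
  ∃ x ∈ G \ S, ∃ y ∈ G \ S,
    E ⊆ connectedComponentIn (G \ S) x ∧ F ⊆ connectedComponentIn (G \ S) y ∧
    connectedComponentIn (G \ S) x ≠ connectedComponentIn (G \ S) y

/-- The family `Γ*(E, F; G)` of measures `H^d` restricted to `S ∩ G`, where `S` ranges over
compact subsets of the closure of `G`, of finite `H^d`-measure in `G`, separating `E` and `F`. -/
def surfaceFamilyH [MetricSpace X] [MeasurableSpace X] [BorelSpace X] (d : ℝ)
    (E F G : Set X) : Set (Measure X) :=
  {ν | ∃ S : Set X, IsCompact S ∧ S ⊆ closure G ∧ μH[d] (S ∩ G) ≠ ⊤ ∧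
    SeparatesIn S E F G ∧ ν = (μH[d]).restrict (S ∩ G)}

/-- The codimension-1 spherical Hausdorff measure associated to `μ`. -/
def codimOneHausdorff [PseudoMetricSpace X] [MeasurableSpace X] (μ : Measure X)
    (A : Set X) : ℝ≥0∞ :=
  ⨆ (δ : ℝ) (_ : 0 < δ),
    ⨅ (c : ℕ → X) (r : ℕ → ℝ) (_ : A ⊆ ⋃ i, ball (c i) (r i))
      (_ : ∀ i, 0 < r i ∧ r i ≤ δ), ∑' i, μ (ball (c i) (r i)) / ENNReal.ofReal (r i)

/-- The integral `∫_A g d𝓗` of `g` over `A` against the codimension-1 spherical Hausdorff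
measure, defined by the layer-cake formula. -/
def codimIntegral [PseudoMetricSpace X] [MeasurableSpace X] (μ : Measure X) (A : Set X)
    (g : X → ℝ≥0∞) : ℝ≥0∞ :=
  ∫⁻ s in Ioi (0 : ℝ), codimOneHausdorff μ (A ∩ {x | ENNReal.ofReal s < g x})

/-- The collection of "surfaces" of `Γ*(E, F; G)`: compact subsets of the closure of `G` of
finite codimension-1 measure in `G` separating `E` and `F` in `G`. -/
def surfaceSets [PseudoMetricSpace X] [MeasurableSpace X] (μ : Measure X) (E F G : Set X) :
    Set (Set X) :=
  {S | IsCompact S ∧ S ⊆ closure G ∧ codimOneHausdorff μ (S ∩ G) ≠ ⊤ ∧ SeparatesIn S E F G}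

/-- The `q`-modulus of a family `𝒮` of surfaces, each equipped with the codimension-1
spherical Hausdorff measure restricted to `S ∩ G`. -/
def surfModulus [PseudoMetricSpace X] [MeasurableSpace X] (μ : Measure X) (q : ℝ)
    (𝒮 : Set (Set X)) (G : Set X) : ℝ≥0∞ :=
  ⨅ (ρ : X → ℝ≥0∞)
    (_ : Measurable ρ ∧ ∀ S ∈ 𝒮, 1 ≤ codimIntegral μ (S ∩ G) ρ),
    ∫⁻ x, ρ x ^ q ∂μ

/-- The upper Lebesgue integral of `f` over `s ⊆ ℝ`. -/
def upperIntegralOn (s : Set ℝ) (f : ℝ → ℝ≥0∞) : ℝ≥0∞ :=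
  ⨅ (ψ : ℝ → ℝ≥0∞) (_ : Measurable ψ ∧ ∀ t, f t ≤ ψ t), ∫⁻ t in s, ψ t

/-- The restricted Hardy–Littlewood maximal function `M_R w`. -/
def restrMaximal [PseudoMetricSpace X] [MeasurableSpace X] (μ : Measure X) (R : ℝ)
    (w : X → ℝ≥0∞) (x : X) : ℝ≥0∞ :=
  ⨆ (r : ℝ) (_ : 0 < r ∧ r ≤ R), ⨍⁻ y in ball x r, w y ∂μ

/-- `x` is a Lebesgue point of `v`. -/
def LebesguePoint [PseudoMetricSpace X] [MeasurableSpace X] (μ : Measure X) (v : X → ℝ)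
    (x : X) : Prop :=
  Tendsto (fun r : ℝ => ⨍ y in ball x r, |v y - v x| ∂μ) (𝓝[>] 0) (𝓝 0)

/-- `u` is locally Lipschitz on `G`. -/
def IsLocallyLipschitzOn [PseudoMetricSpace X] (u : X → ℝ) (G : Set X) : Prop :=
  ∀ x ∈ G, ∃ (K : ℝ≥0) (t : Set X), t ∈ 𝓝[G] x ∧ LipschitzOnWith K u t

/-- `X` is a geodesic metric space. -/
def IsGeodesicSpace (X : Type*) [MetricSpace X] : Prop :=
  ∀ x y : X, ∃ γ : ℝ → X, γ 0 = x ∧ γ (dist x y) = y ∧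
    ∀ s ∈ Icc (0 : ℝ) (dist x y), ∀ t ∈ Icc (0 : ℝ) (dist x y), dist (γ s) (γ t) = |s - t|

/-- `G` is a domain (open connected set) with compact closure. -/
def IsDomainWithCompactClosure [TopologicalSpace X] (G : Set X) : Prop :=
  IsOpen G ∧ IsConnected G ∧ IsCompact (closure G)

/-- `E` is a nondegenerate continuum: compact, connected, with at least two points. -/
def IsNondegContinuum [TopologicalSpace X] (E : Set X) : Prop :=
  IsCompact E ∧ IsConnected E ∧ E.Nontrivial

/-- The distance between two sets. -/
def setDist [PseudoMetricSpace X] (E F : Set X) : ℝ :=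
  sInf ((fun p : X × X => dist p.1 p.2) '' (E ×ˢ F))

/-- The `s`-dimensional Hausdorff content. -/
def hContent {Y : Type*} [EMetricSpace Y] (s : ℝ) (E : Set Y) : ℝ≥0∞ :=
  ⨅ (U : ℕ → Set Y) (_ : E ⊆ ⋃ i, U i), ∑' i, EMetric.diam (U i) ^ s

end

namespace SurfMod

/-- Projection of the real line onto `[0, T]`. -/
def clamp (T t : ℝ) : ℝ := max 0 (min T t)

theorem clamp_mem {T : ℝ} (hT : 0 ≤ T) (t : ℝ) : clamp T t ∈ Icc 0 T := by
  unfold clamp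
  exact ⟨le_max_left _ _, max_le hT (min_le_left _ _)⟩

theorem clamp_of_mem {T t : ℝ} (h : t ∈ Icc 0 T) : clamp T t = t := by
  unfold clamp
  rw [min_eq_right h.2, max_eq_right h.1]

theorem clamp_sub_le (T s t : ℝ) : |clamp T s - clamp T t| ≤ |s - t| := by
  unfold clamp
  have h : LipschitzWith 1 (fun t : ℝ => max 0 (min T t)) :=
    (LipschitzWith.id.const_min T).const_max 0
  have := h.dist_le_mul s t
  simpa [Real.dist_eq] using this

theorem curve_limit {X : Type*} [MetricSpace X] {V : Set X} (hV : IsCompact V) (γ : ℕ → ℝ → X)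
    (hγV : ∀ k t, γ k t ∈ V) (K e : ℕ → ℝ) (K0 : ℝ) (hK : Tendsto K atTop (𝓝 K0))
    (he : Tendsto e atTop (𝓝 0))
    (h : ∀ k s t, dist (γ k s) (γ k t) ≤ K k * |s - t| + e k) :
    ∃ σ : ℝ → X, ∃ φ : ℕ → ℕ, StrictMono φ ∧
      (∀ t, Tendsto (fun k => γ (φ k) t) atTop (𝓝 (σ t))) ∧ (∀ t, σ t ∈ V) ∧
      ∀ s t, dist (σ s) (σ t) ≤ K0 * |s - t| := by
  obtain ⟨a, -, φ, hφ, ha⟩ := (isCompact_univ_pi (fun _ : ℚ => hV)).tendsto_subseq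
    (x := fun k (q : ℚ) => γ k (q : ℝ)) (fun k q _ => hγV k q)
  have ha' : ∀ q : ℚ, Tendsto (fun k => γ (φ k) (q : ℝ)) atTop (𝓝 (a q)) := by
    intro q
    exact (tendsto_pi_nhds.1 ha) q
  have hKφ : Tendsto (fun k => K (φ k)) atTop (𝓝 K0) := hK.comp hφ.tendsto_atTop
  have heφ : Tendsto (fun k => e (φ k)) atTop (𝓝 0) := he.comp hφ.tendsto_atTop
  have hcau : ∀ t, CauchySeq (fun k => γ (φ k) t) := by
    intro t
    rw [Metric.cauchySeq_iff]
    intro ε hε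
    obtain ⟨q, hq1, hq2⟩ := exists_rat_btwn (show t < t + ε / (8 * (|K0| + 1)) by
      have : 0 < ε / (8 * (|K0| + 1)) := by positivity
      linarith)
    have hq : |t - q| ≤ ε / (8 * (|K0| + 1)) := by
      rw [abs_le]; constructor <;> linarith
    have h1 : ∀ᶠ k in atTop, K (φ k) * |t - q| + e (φ k) < ε / 4 := by
      have hl : Tendsto (fun k => K (φ k) * |t - q| + e (φ k)) atTop (𝓝 (K0 * |t - q| + 0)) :=
        (hKφ.mul_const _).add heφ
      apply hl.eventually_lt_const
      have : K0 * |t - q| ≤ |K0| * (ε / (8 * (|K0| + 1))) := by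
        calc K0 * |t - q| ≤ |K0| * |t - q| := by gcongr; exact le_abs_self _
          _ ≤ _ := by gcongr
      have h2 : |K0| * (ε / (8 * (|K0| + 1))) ≤ ε / 8 := by
        have : |K0| * (ε / (8 * (|K0| + 1))) = (|K0| / (|K0| + 1)) * (ε / 8) := by
          field_simp
        rw [this]
        have : |K0| / (|K0| + 1) ≤ 1 := by
          rw [div_le_one (by positivity)]; linarith
        nlinarith
      linarith
    obtain ⟨N2, hN2⟩ := (Metric.cauchySeq_iff.1 (ha' q).cauchySeq) (ε / 4) (by positivity)
    obtain ⟨N1, hN1⟩ := eventually_atTop.1 h1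
    refine ⟨max N1 N2, fun m hm n hn => ?_⟩
    have e1 := h (φ m) t q
    have e2 := h (φ n) t q
    have e3 := hN2 m (le_trans (le_max_right _ _) hm) n (le_trans (le_max_right _ _) hn)
    have e4 := hN1 m (le_trans (le_max_left _ _) hm)
    have e5 := hN1 n (le_trans (le_max_left _ _) hn)
    have := dist_triangle4 (γ (φ m) t) (γ (φ m) q) (γ (φ n) q) (γ (φ n) t)
    rw [dist_comm (γ (φ n) q)] at this
    linarith
  have hex : ∀ t, ∃ x ∈ V, Tendsto (fun k => γ (φ k) t) atTop (𝓝 x) := by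
    intro t
    exact cauchySeq_tendsto_of_isComplete hV.isComplete (fun k => hγV _ _) (hcau t)
  choose σ hσV hσ using hex
  refine ⟨σ, φ, hφ, hσ, hσV, fun s t => ?_⟩
  have l1 := (hσ s).dist (hσ t)
  have l2 : Tendsto (fun k => K (φ k) * |s - t| + e (φ k)) atTop (𝓝 (K0 * |s - t| + 0)) :=
        (hKφ.mul_const _).add heφ
  rw [add_zero] at l2
  exact le_of_tendsto_of_tendsto' l1 l2 (fun k => h _ _ _)

/-- Inside a Lipschitz curve there is a shortest, hence injective, Lipschitz curve. -/
theorem exists_injective {X : Type*} [MetricSpace X] {K : ℝ≥0} {γ : ℝ → X}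
    (hγ : LipschitzWith K γ) (hne : γ 0 ≠ γ 1) :
    ∃ (K' : ℝ≥0) (σ : ℝ → X), LipschitzWith K' σ ∧ InjOn σ (Icc 0 1) ∧ σ 0 = γ 0 ∧ σ 1 = γ 1 ∧
      ∀ t, σ t ∈ γ '' Icc 0 1 := by
  set C : Set X := γ '' Icc 0 1
  have hC : IsCompact C := isCompact_Icc.image hγ.continuous
  let S : Set ℝ := {k | 0 ≤ k ∧ ∃ σ : ℝ → X, (∀ s t, dist (σ s) (σ t) ≤ k * |s - t|) ∧
    σ 0 = γ 0 ∧ σ 1 = γ 1 ∧ ∀ t, σ t ∈ C}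
  have hSne : S.Nonempty := by
    refine ⟨K, K.2, fun t => γ (clamp 1 t), ?_, ?_, ?_, ?_⟩
    · intro s t
      refine (hγ.dist_le_mul _ _).trans ?_
      rw [Real.dist_eq]
      exact mul_le_mul_of_nonneg_left (clamp_sub_le 1 s t) K.2
    · simp only; rw [clamp_of_mem (by simp)]
    · simp only; rw [clamp_of_mem (by simp)]
    · intro t
      exact ⟨_, clamp_mem zero_le_one t, rfl⟩
  have hSb : BddBelow S := ⟨0, fun k hk => hk.1⟩
  set K0 := sInf S with hK0
  obtain ⟨u, -, hu, huS⟩ := exists_seq_tendsto_sInf hSne hSb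
  choose hu0 σ hσ hσ0 hσ1 hσC using huS
  obtain ⟨τ, φ, hφ, hτ, hτC, hτL⟩ := curve_limit hC σ hσC u (fun _ => 0) K0 hu
    tendsto_const_nhds (by intro k s t; simpa using hσ k s t)
  have hK0n : 0 ≤ K0 := Real.sInf_nonneg (fun k hk => hk.1)
  have hτ0 : τ 0 = γ 0 := by
    refine tendsto_nhds_unique (hτ 0) ?_
    simp [hσ0]
  have hτ1 : τ 1 = γ 1 := by
    refine tendsto_nhds_unique (hτ 1) ?_
    simp [hσ1]
  have hK0p : 0 < K0 := by
    have := hτL 0 1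
    rw [hτ0, hτ1] at this
    have h2 := dist_pos.2 hne
    norm_num at this
    linarith
  have key : ∀ s ∈ Icc (0:ℝ) 1, ∀ t ∈ Icc (0:ℝ) 1, s < t → τ s ≠ τ t := by
    intro s hs t ht hst heq
    -- cut out the loop
    set d := t - s with hd
    have hd0 : 0 < d := by linarith
    have hd1 : d ≤ 1 := by linarith [hs.1, ht.2]
    have hd1' : d ≠ 1 := by
      intro h
      have h1 : s = 0 := by linarith [hs.1, ht.2]
      have h2 : t = 1 := by linarith [hs.1, ht.2]
      rw [h1, h2, hτ0, hτ1] at heq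
      exact hne heq
    have hd2 : d < 1 := lt_of_le_of_ne hd1 hd1'
    let w : ℝ → X := fun x => if x ≤ s then τ x else τ (x + d)
    have hw : ∀ x y, x ≤ y → dist (w x) (w y) ≤ K0 * |x - y| := by
      intro x y hxy
      simp only [w]
      by_cases hx : x ≤ s
      · by_cases hy : y ≤ s
        · simp only [hx, hy, if_true]; exact hτL x y
        · simp only [hx, hy, if_true, if_false]
          push Not at hy
          calc dist (τ x) (τ (y + d)) ≤ dist (τ x) (τ s) + dist (τ s) (τ (y + d)) :=
                dist_triangle _ _ _
            _ = dist (τ x) (τ s) + dist (τ t) (τ (y + d)) := by rw [heq]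
            _ ≤ K0 * |x - s| + K0 * |t - (y + d)| := add_le_add (hτL _ _) (hτL _ _)
            _ = K0 * |x - y| := by
              rw [abs_of_nonpos (by linarith), abs_of_nonpos (by linarith),
                abs_of_nonpos (by linarith), hd]; ring
      · have hy : ¬ y ≤ s := by push Not at hx ⊢; linarith
        simp only [hx, hy, if_false]
        have := hτL (x + d) (y + d)
        simpa using this
    have hw' : ∀ x y, dist (w x) (w y) ≤ K0 * |x - y| := by
      intro x y
      rcases le_total x y with h | h
      · exact hw x y h
      · rw [dist_comm, abs_sub_comm]; exact hw y x h
    have hmem : K0 * (1 - d) ∈ S := by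
      refine ⟨by nlinarith, fun x => w ((1 - d) * x), ?_, ?_, ?_, ?_⟩
      · intro x y
        refine (hw' _ _).trans (le_of_eq ?_)
        rw [← mul_sub, abs_mul, abs_of_nonneg (by linarith : 0 ≤ 1 - d)]; ring
      · simp only [w, mul_zero, hs.1, if_true, hτ0]
      · simp only [w, mul_one]
        by_cases h : 1 - d ≤ s
        · have h2 : t = 1 := by linarith [ht.2]
          have h3 : 1 - d = s := by linarith
          simp only [h3, le_refl, if_true, heq, h2, hτ1]
        · simp only [h, if_false, sub_add_cancel, hτ1]
      · intro x
        simp only [w]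
        split_ifs <;> exact hτC _
    have := csInf_le hSb hmem
    rw [← hK0] at this
    nlinarith
  refine ⟨⟨K0, hK0n⟩, τ, ?_, ?_, hτ0, hτ1, hτC⟩
  · apply LipschitzWith.of_dist_le_mul
    intro x y
    rw [Real.dist_eq]
    exact hτL x y
  · intro s hs t ht hst
    rcases lt_trichotomy s t with h | h | h
    · exact absurd hst (key s hs t ht h)
    · exact h
    · exact absurd hst.symm (key t ht s hs h)

theorem exists_pathFamily {X : Type*} [MetricSpace X] [MeasurableSpace X] [BorelSpace X]
    {E F G : Set X} (hEF : Disjoint E F) {K : ℝ≥0} {γ : ℝ → X}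
    (hγ : LipschitzWith K γ) (hG : ∀ t, γ t ∈ G) (h0 : γ 0 ∈ E) (h1 : γ 1 ∈ F) :
    ∃ ν ∈ pathFamily E F G, ∀ ρ : X → ℝ≥0∞, Measurable ρ →
      ∫⁻ x, ρ x ∂ν ≤ K * ∫⁻ t in Icc (0:ℝ) 1, ρ (γ t) := by
  have hne : γ 0 ≠ γ 1 := fun h => (hEF.ne_of_mem h0 h1) h
  obtain ⟨K', σ, hσ, hinj, hσ0, hσ1, hσC⟩ := exists_injective hγ hne
  refine ⟨(μH[1]).restrict (σ '' Icc 0 1), ⟨σ, hσ.continuous.continuousOn, hinj, ?_, ?_, ?_, ?_,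
    rfl⟩, ?_⟩
  · have := (hσ.lipschitzOnWith (s := Icc 0 1)).locallyBoundedVariationOn 0 1 (by simp) (by simp)
    simpa [BoundedVariationOn] using this
  · intro t _
    obtain ⟨s, -, hs⟩ := hσC t
    rw [← hs]; exact hG s
  · rw [hσ0]; exact h0
  · rw [hσ1]; exact h1
  · intro ρ hρ
    have hle : (μH[1] : Measure X).restrict (σ '' Icc 0 1) ≤
        (K : ℝ≥0∞) • Measure.map γ (volume.restrict (Icc (0:ℝ) 1)) := by
      rw [Measure.le_iff]
      intro B hB
      rw [Measure.restrict_apply hB, Measure.smul_apply,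
        Measure.map_apply hγ.continuous.measurable hB,
        Measure.restrict_apply (hγ.continuous.measurable hB), smul_eq_mul]
      calc (μH[1] : Measure X) (B ∩ σ '' Icc 0 1) ≤ μH[1] (γ '' (γ ⁻¹' B ∩ Icc 0 1)) := by
            apply measure_mono
            rintro x ⟨hxB, t, -, rfl⟩
            obtain ⟨s, hs, hs'⟩ := hσC t
            refine ⟨s, ⟨?_, hs⟩, hs'⟩
            rw [mem_preimage, hs']; exact hxB
        _ ≤ (K : ℝ≥0∞) ^ (1:ℝ) * μH[1] (γ ⁻¹' B ∩ Icc 0 1) :=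
            hγ.hausdorffMeasure_image_le zero_le_one _
        _ = _ := by rw [ENNReal.rpow_one, hausdorffMeasure_real]
    calc ∫⁻ x, ρ x ∂((μH[1] : Measure X).restrict (σ '' Icc 0 1)) ≤ _ := lintegral_mono' hle le_rfl
      _ = _ := by
        rw [lintegral_smul_measure, lintegral_map hρ hγ.continuous.measurable, smul_eq_mul]

end SurfMod

namespace SurfMod

theorem lintegral_affine_le (h : ℝ → ℝ≥0∞) (s c : ℝ) (hc : c ≠ 0) (J : Set ℝ)
    (hJ : MeasurableSet J) (hm : ∀ τ ∈ Icc (0:ℝ) 1, s + c * τ ∈ J) :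
    ∫⁻ τ in Icc (0:ℝ) 1, h (s + c * τ) ≤ ENNReal.ofReal |c⁻¹| * ∫⁻ t in J, h t := by
  have he : MeasurableEmbedding (fun τ : ℝ => s + c * τ) :=
    (measurableEmbedding_addLeft s).comp (measurableEmbedding_mulLeft₀ hc)
  have hmap : Measure.map (fun τ : ℝ => s + c * τ) volume = ENNReal.ofReal |c⁻¹| • volume := by
    have : (fun τ : ℝ => s + c * τ) = (fun x => s + x) ∘ (fun x => c * x) := rfl
    rw [this, ← Measure.map_map (measurable_const_add s) (measurable_const_mul c),
      Real.map_volume_mul_left hc, Measure.map_smul, map_add_left_eq_self]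
  calc ∫⁻ τ in Icc (0:ℝ) 1, h (s + c * τ)
      ≤ ∫⁻ τ in (fun τ : ℝ => s + c * τ) ⁻¹' J, h (s + c * τ) :=
        lintegral_mono_set (fun τ hτ => hm τ hτ)
    _ = ∫⁻ t in J, h t ∂(Measure.map (fun τ : ℝ => s + c * τ) volume) := by
        rw [he.restrict_map, he.lintegral_map]
    _ = _ := by
        rw [hmap, Measure.restrict_smul, lintegral_smul_measure, smul_eq_mul]

variable {X : Type*} [MetricSpace X]

/-- `y` can be reached from `x` by a Lipschitz curve in `G` of finite `ρ`-length. -/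
def Reach (G : Set X) (ρ : X → ℝ≥0∞) (x y : X) : Prop :=
  ∃ (K : ℝ≥0) (γ : ℝ → X), LipschitzWith K γ ∧ (∀ t, γ t ∈ G) ∧ γ 0 = x ∧ γ 1 = y ∧
    ∫⁻ t in Icc (0:ℝ) 1, ρ (γ t) ≠ ⊤

theorem reach_of_curve {G : Set X} {ρ : X → ℝ≥0∞} {K : ℝ≥0} {γ : ℝ → X} {L : ℝ}
    (hγ : LipschitzOnWith K γ (Icc 0 L)) (hG : MapsTo γ (Icc 0 L) G)
    (hfin : ∫⁻ t in Icc (0:ℝ) L, ρ (γ t) ≠ ⊤) {s t : ℝ} (hs : s ∈ Icc 0 L) (ht : t ∈ Icc 0 L)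
    (hst : s ≠ t) : Reach G ρ (γ s) (γ t) := by
  have hc : t - s ≠ 0 := sub_ne_zero.2 hst.symm
  have hm : ∀ τ ∈ Icc (0:ℝ) 1, s + (t - s) * τ ∈ Icc 0 L := by
    intro τ hτ
    have := (convex_Icc (0:ℝ) L) hs ht (sub_nonneg.2 hτ.2) hτ.1 (by ring)
    convert this using 1
    simp only [smul_eq_mul]; ring
  refine ⟨K * ‖t - s‖₊, fun τ => γ (s + (t - s) * clamp 1 τ), ?_, ?_, ?_, ?_, ?_⟩
  · apply LipschitzWith.of_dist_le_mul
    intro x y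
    refine (hγ.dist_le_mul _ (hm _ (clamp_mem zero_le_one x)) _
      (hm _ (clamp_mem zero_le_one y))).trans ?_
    rw [Real.dist_eq, Real.dist_eq, NNReal.coe_mul, coe_nnnorm, Real.norm_eq_abs, mul_assoc]
    apply mul_le_mul_of_nonneg_left _ K.2
    have : s + (t - s) * clamp 1 x - (s + (t - s) * clamp 1 y)
      = (t - s) * (clamp 1 x - clamp 1 y) := by ring
    rw [this, abs_mul]
    exact mul_le_mul_of_nonneg_left (clamp_sub_le 1 x y) (abs_nonneg _)
  · intro τ
    exact hG (hm _ (clamp_mem zero_le_one τ))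
  · simp only; rw [clamp_of_mem (by simp)]; simp
  · simp only; rw [clamp_of_mem (by simp)]; simp
  · have : ∫⁻ τ in Icc (0:ℝ) 1, ρ (γ (s + (t - s) * clamp 1 τ)) =
        ∫⁻ τ in Icc (0:ℝ) 1, ρ (γ (s + (t - s) * τ)) := by
      apply setLIntegral_congr_fun measurableSet_Icc
      intro τ hτ
      simp only; rw [clamp_of_mem hτ]
    simp only
    rw [this]
    refine ne_top_of_le_ne_top ?_ (lintegral_affine_le (fun u => ρ (γ u)) s (t - s) hc (Icc 0 L)
      measurableSet_Icc hm)
    exact ENNReal.mul_ne_top ENNReal.ofReal_ne_top hfin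

theorem Reach.symm {G : Set X} {ρ : X → ℝ≥0∞} {x y : X} (h : Reach G ρ x y) : Reach G ρ y x := by
  obtain ⟨K, γ, hγ, hG, rfl, rfl, hfin⟩ := h
  exact reach_of_curve (hγ.lipschitzOnWith) (fun t _ => hG t) hfin (by simp) (by simp) (by simp)

theorem Reach.trans {G : Set X} {ρ : X → ℝ≥0∞} {x y z : X} (h : Reach G ρ x y)
    (h' : Reach G ρ y z) : Reach G ρ x z := by
  obtain ⟨K, γ, hγ, hG, rfl, rfl, hfin⟩ := h
  obtain ⟨K', γ', hγ', hG', h0, rfl, hfin'⟩ := h'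
  let σ : ℝ → X := fun t => if t ≤ 1 then γ t else γ' (t - 1)
  have hKm : (K : ℝ) ≤ (max K K' : ℝ≥0) := by exact_mod_cast le_max_left _ _
  have hKm' : (K' : ℝ) ≤ (max K K' : ℝ≥0) := by exact_mod_cast le_max_right _ _
  have hσ : ∀ a b, a ≤ b → dist (σ a) (σ b) ≤ (max K K' : ℝ≥0) * |a - b| := by
    intro a b hab
    simp only [σ]
    by_cases ha : a ≤ 1
    · by_cases hb : b ≤ 1
      · simp only [ha, hb, if_true]
        refine (hγ.dist_le_mul _ _).trans ?_
        rw [Real.dist_eq]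
        exact mul_le_mul_of_nonneg_right hKm (abs_nonneg _)
      · simp only [ha, hb, if_true, if_false]
        push Not at hb
        calc dist (γ a) (γ' (b - 1)) ≤ dist (γ a) (γ 1) + dist (γ' 0) (γ' (b - 1)) := by
              rw [h0]; exact dist_triangle _ _ _
          _ ≤ K * dist a 1 + K' * dist 0 (b - 1) :=
              add_le_add (hγ.dist_le_mul _ _) (hγ'.dist_le_mul _ _)
          _ ≤ (max K K' : ℝ≥0) * dist a 1 + (max K K' : ℝ≥0) * dist 0 (b - 1) := by gcongr
          _ = _ := by
            rw [Real.dist_eq, Real.dist_eq, abs_of_nonpos (by linarith : a - 1 ≤ 0),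
              abs_of_nonpos (by linarith : 0 - (b - 1) ≤ 0),
              abs_of_nonpos (by linarith : a - b ≤ 0)]
            ring
    · have hb : ¬ b ≤ 1 := by push Not at ha ⊢; linarith
      simp only [ha, hb, if_false]
      refine (hγ'.dist_le_mul _ _).trans ?_
      rw [Real.dist_eq]
      have : a - 1 - (b - 1) = a - b := by ring
      rw [this]
      exact mul_le_mul_of_nonneg_right hKm' (abs_nonneg _)
  have hσL : LipschitzWith (max K K') σ := by
    apply LipschitzWith.of_dist_le_mul
    intro a b
    rw [Real.dist_eq]
    rcases le_total a b with hab | hab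
    · exact hσ a b hab
    · rw [dist_comm, abs_sub_comm]; exact hσ b a hab
  have hσG : ∀ t, σ t ∈ G := by
    intro t; simp only [σ]; split_ifs
    · exact hG _
    · exact hG' _
  have hσ0 : σ 0 = γ 0 := by simp [σ]
  have hσ2 : σ 2 = γ' 1 := by simp [σ]; norm_num
  have hInt : ∫⁻ t in Icc (0:ℝ) 2, ρ (σ t) ≠ ⊤ := by
    have hsub : Icc (0:ℝ) 2 = Icc 0 1 ∪ Ioc 1 2 := (Icc_union_Ioc_eq_Icc (by norm_num) (by norm_num)).symm
    have h1 : ∫⁻ t in Icc (0:ℝ) 1, ρ (σ t) = ∫⁻ t in Icc (0:ℝ) 1, ρ (γ t) := by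
      apply setLIntegral_congr_fun measurableSet_Icc
      intro t ht
      simp only [σ, ht.2, if_true]
    have h2 : ∫⁻ t in Ioc (1:ℝ) 2, ρ (σ t) = ∫⁻ t in Icc (0:ℝ) 1, ρ (γ' t) := by
      have : ∫⁻ t in Ioc (1:ℝ) 2, ρ (σ t) = ∫⁻ t in Ioc (1:ℝ) 2, ρ (γ' (t - 1)) := by
        apply setLIntegral_congr_fun measurableSet_Ioc
        intro t ht
        have : ¬ t ≤ 1 := not_le.2 ht.1
        simp only [σ, this, if_false]
      rw [this, setLIntegral_congr Ioc_ae_eq_Icc]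
      have hp := (measurePreserving_sub_right (volume : Measure ℝ) 1).setLIntegral_comp_preimage_emb
        (measurableEmbedding_subRight 1) (fun t => ρ (γ' t)) (Icc 0 1)
      rw [← hp]
      congr 2
      ext t; simp only [mem_preimage, mem_Icc]; constructor <;> rintro ⟨h1, h2⟩ <;>
        constructor <;> linarith
    rw [hsub]
    refine ne_top_of_le_ne_top ?_ (lintegral_union_le _ _ _)
    rw [h1, h2]
    exact ENNReal.add_ne_top.2 ⟨hfin, hfin'⟩
  have := reach_of_curve (G := G) (ρ := ρ) hσL.lipschitzOnWith (fun t _ => hσG t) hInt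
    (s := 0) (t := 2) (by simp) (by simp) (by norm_num)
  rwa [hσ0, hσ2] at this

/-- Compact exhaustion of an open set. -/
def exh (G : Set X) (n : ℕ) : Set X := {x | ((n : ℝ≥0∞) + 1)⁻¹ ≤ infEDist x Gᶜ}

theorem exh_subset (G : Set X) (n : ℕ) : exh G n ⊆ G := by
  intro x hx
  by_contra hxG
  have : infEDist x Gᶜ = 0 := infEDist_zero_of_mem hxG
  simp only [exh, mem_ofPred_eq, this, nonpos_iff_eq_zero, ENNReal.inv_eq_zero] at hx
  exact (ENNReal.add_ne_top.2 ⟨ENNReal.natCast_ne_top n, ENNReal.one_ne_top⟩) hx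

theorem exh_compact {G : Set X} (hGc : IsCompact (closure G)) (n : ℕ) : IsCompact (exh G n) := by
  apply hGc.of_isClosed_subset
  · exact isClosed_le continuous_const continuous_infEDist
  · exact (exh_subset G n).trans subset_closure

theorem subset_exh {G C : Set X} (hG : IsOpen G) (hC : IsCompact C) (hCG : C ⊆ G) :
    ∃ n, C ⊆ exh G n := by
  obtain ⟨r, hr, h⟩ := Metric.exists_pos_forall_lt_edist hC hG.isClosed_compl
    (disjoint_compl_right_iff_subset.2 hCG)
  obtain ⟨n, hn⟩ := ENNReal.exists_inv_nat_lt (a := (r : ℝ≥0∞)) (by exact_mod_cast hr.ne')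
  refine ⟨n, fun x hx => ?_⟩
  simp only [exh, mem_ofPred_eq, le_infEDist]
  intro y hy
  refine le_trans ?_ (h x hx y hy).le
  refine le_trans ?_ hn.le
  exact ENNReal.inv_le_inv.2 le_self_add

variable [MeasurableSpace X] [BorelSpace X]

theorem measurable_reach {G E : Set X} (hG : IsOpen G) (hGc : IsCompact (closure G))
    (hE : IsCompact E) {ρ : X → ℝ≥0∞} (hρ : LowerSemicontinuous ρ) :
    MeasurableSet {y | ∃ x ∈ E, Reach G ρ x y} := by
  let R : ℕ → ℕ → ℕ → Set X := fun n m l => {y | ∃ γ : ℝ → X,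
    (∀ s t, dist (γ s) (γ t) ≤ (m : ℝ) * |s - t|) ∧ (∀ t, γ t ∈ exh G n) ∧ γ 0 ∈ E ∧ γ 1 = y ∧
    ∫⁻ t in Icc (0:ℝ) 1, ρ (γ t) ≤ l}
  have hA : {y | ∃ x ∈ E, Reach G ρ x y} = ⋃ n, ⋃ m, ⋃ l, R n m l := by
    ext y
    simp only [mem_ofPred_eq, mem_iUnion, R]
    constructor
    · rintro ⟨x, hx, K, γ, hγ, hγG, rfl, rfl, hfin⟩
      obtain ⟨m, hm⟩ := exists_nat_ge K
      obtain ⟨l, hl⟩ := ENNReal.exists_nat_gt hfin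
      obtain ⟨n, hn⟩ := subset_exh hG ((isCompact_Icc (a := (0:ℝ)) (b := 1)).image hγ.continuous)
        (by rintro _ ⟨t, -, rfl⟩; exact hγG t)
      refine ⟨n, m, l, fun t => γ (clamp 1 t), ?_, ?_, ?_, ?_, ?_⟩
      · intro s t
        refine (hγ.dist_le_mul _ _).trans ?_
        rw [Real.dist_eq]
        have hm' : (K : ℝ) ≤ m := by exact_mod_cast hm
        exact mul_le_mul hm' (clamp_sub_le 1 s t) (abs_nonneg _) (Nat.cast_nonneg m)
      · intro t
        exact hn ⟨_, clamp_mem zero_le_one t, rfl⟩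
      · simp only; rw [clamp_of_mem (by simp)]; exact hx
      · simp only; rw [clamp_of_mem (by simp)]
      · refine le_trans (le_of_eq ?_) hl.le
        apply setLIntegral_congr_fun measurableSet_Icc
        intro t ht
        simp only; rw [clamp_of_mem ht]
    · rintro ⟨n, m, l, γ, hγ, hγG, h0, rfl, hl⟩
      refine ⟨γ 0, h0, m, γ, ?_, fun t => exh_subset G n (hγG t), rfl, rfl,
        ne_top_of_le_ne_top (ENNReal.natCast_ne_top l) hl⟩
      apply LipschitzWith.of_dist_le_mul
      intro s t
      rw [Real.dist_eq]
      simpa using hγ s t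
  rw [hA]
  refine MeasurableSet.iUnion fun n => MeasurableSet.iUnion fun m => MeasurableSet.iUnion fun l =>
    IsClosed.measurableSet ?_
  apply IsSeqClosed.isClosed
  intro y y0 hy hy0
  choose γ hγ hγG hγ0 hγ1 hγl using hy
  obtain ⟨σ, φ, hφ, hσ, hσV, hσL⟩ := curve_limit (exh_compact hGc n) γ hγG (fun _ => (m:ℝ))
    (fun _ => 0) m tendsto_const_nhds tendsto_const_nhds (by intro k s t; simpa using hγ k s t)
  refine ⟨σ, hσL, hσV, ?_, ?_, ?_⟩
  · exact hE.isClosed.mem_of_tendsto (hσ 0) (Eventually.of_forall fun k => hγ0 _)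
  · refine tendsto_nhds_unique (hσ 1) ?_
    have : (fun k => γ (φ k) 1) = fun k => y (φ k) := by funext k; exact hγ1 _
    rw [this]
    exact hy0.comp hφ.tendsto_atTop
  · have hmeas : ∀ k, Measurable (fun t => ρ (γ (φ k) t)) := by
      intro k
      apply hρ.measurable.comp
      have : LipschitzWith m (γ (φ k)) := by
        apply LipschitzWith.of_dist_le_mul
        intro s t
        rw [Real.dist_eq]
        simpa using hγ (φ k) s t
      exact this.continuous.measurable
    calc ∫⁻ t in Icc (0:ℝ) 1, ρ (σ t)
        ≤ ∫⁻ t in Icc (0:ℝ) 1, liminf (fun k => ρ (γ (φ k) t)) atTop := by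
          apply lintegral_mono
          intro t
          exact (hρ.le_liminf (σ t)).trans (liminf_le_liminf_of_le (hσ t))
      _ ≤ liminf (fun k => ∫⁻ t in Icc (0:ℝ) 1, ρ (γ (φ k) t)) atTop := lintegral_liminf_le hmeas
      _ ≤ l := by
          refine (liminf_le_liminf (Eventually.of_forall fun k => hγl (φ k))).trans ?_
          simp

end SurfMod

namespace SurfMod
variable {X : Type*} [MetricSpace X] [MeasurableSpace X] [BorelSpace X]

theorem exists_lsc (ν : Measure X) [IsFiniteMeasure ν] {p : ℝ} (hp : 0 < p) {f : X → ℝ≥0∞}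
    (hf : Measurable f) (hfin : ∫⁻ x, f x ^ p ∂ν ≠ ⊤) :
    ∃ ρ : X → ℝ≥0∞, LowerSemicontinuous ρ ∧ (∀ x, f x ≤ ρ x) ∧ ∫⁻ x, ρ x ^ p ∂ν ≠ ⊤ := by
  obtain ⟨H, hH, hlsc, hInt⟩ := exists_le_lowerSemicontinuous_lintegral_ge ν (fun x => f x ^ p)
    (hf.pow_const p) (ε := 1) one_ne_zero
  refine ⟨fun x => H x ^ (p⁻¹), ?_, ?_, ?_⟩
  · exact (ENNReal.continuous_rpow_const (y := p⁻¹)).comp_lowerSemicontinuous hlsc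
      (ENNReal.monotone_rpow_of_nonneg (by positivity))
  · intro x
    calc f x = (f x ^ p) ^ (p⁻¹) := by rw [ENNReal.rpow_rpow_inv hp.ne']
      _ ≤ _ := ENNReal.rpow_le_rpow (hH x) (by positivity)
  · have : (fun x => (H x ^ (p⁻¹)) ^ p) = H := by
      funext x; rw [ENNReal.rpow_inv_rpow hp.ne']
    simp only [this]
    exact ne_top_of_le_ne_top (ENNReal.add_ne_top.2 ⟨hfin, ENNReal.one_ne_top⟩) hInt

theorem isLocallyFinite {μ : Measure X} {Cμ : ℝ} (hD : IsDoublingWith μ Cμ) :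
    IsLocallyFiniteMeasure μ :=
  ⟨fun x => ⟨ball x 1, ball_mem_nhds x one_pos, (hD x 1 one_pos).2.2⟩⟩

theorem ball_pos {μ : Measure X} {Cμ : ℝ} (hD : IsDoublingWith μ Cμ) (x : X) {r : ℝ} (hr : 0 < r) :
    0 < μ (ball x r) := by
  have := (hD x (r / 2) (by positivity)).1
  rwa [mul_div_cancel₀ r two_ne_zero] at this

/-- From zero path modulus: a lower semicontinuous `p`-integrable function with infinite integral
over all curves joining `E` and `F`. -/
theorem exists_blowup (μ : Measure X) {p : ℝ} (hp : 1 < p) {E F G : Set X}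
    (hGfin : μ G ≠ ⊤) (hEF : Disjoint E F) (hmod : modulus μ p (pathFamily E F G) = 0) :
    ∃ ρ : X → ℝ≥0∞, LowerSemicontinuous ρ ∧ ∫⁻ x in G, ρ x ^ p ∂μ ≠ ⊤ ∧
      ∀ x ∈ E, ∀ y ∈ F, ¬ Reach G ρ x y := by
  have hp0 : 0 < p := by linarith
  have hex : ∀ n : ℕ, ∃ ρ : X → ℝ≥0∞, Admissible (pathFamily E F G) ρ ∧
      ∫⁻ x, ρ x ^ p ∂μ < ((n + 1 : ℕ) : ℝ≥0∞)⁻¹ ^ p * (2⁻¹) ^ n := by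
    intro n
    have hpos : 0 < ((n + 1 : ℕ) : ℝ≥0∞)⁻¹ ^ p * (2⁻¹) ^ n := by
      apply ENNReal.mul_pos
      · apply (ENNReal.rpow_pos _ _).ne'
        · exact ENNReal.inv_pos.2 (ENNReal.natCast_ne_top _)
        · simp
      · exact pow_ne_zero _ (by simp)
    rw [← hmod, modulus] at hpos
    simp only [iInf_lt_iff] at hpos
    obtain ⟨ρ, h1, h2⟩ := hpos
    exact ⟨ρ, h1, h2⟩
  choose r hradm hrint using hex
  let f : X → ℝ≥0∞ := fun x => ⨆ n : ℕ, ((n + 1 : ℕ) : ℝ≥0∞) * r n x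
  have hfm : Measurable f := Measurable.iSup fun n => (hradm n).1.const_mul _
  have hfint : ∫⁻ x in G, f x ^ p ∂μ ≠ ⊤ := by
    have h1 : ∀ x, f x ^ p ≤ ∑' n : ℕ, ((n + 1 : ℕ) : ℝ≥0∞) ^ p * r n x ^ p := by
      intro x
      have : f x ≤ (∑' n : ℕ, ((n + 1 : ℕ) : ℝ≥0∞) ^ p * r n x ^ p) ^ (p⁻¹) := by
        apply iSup_le
        intro n
        calc ((n + 1 : ℕ) : ℝ≥0∞) * r n x = ((((n + 1 : ℕ) : ℝ≥0∞) * r n x) ^ p) ^ (p⁻¹) := by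
              rw [ENNReal.rpow_rpow_inv hp0.ne']
          _ ≤ _ := by
              apply ENNReal.rpow_le_rpow _ (by positivity)
              rw [ENNReal.mul_rpow_of_nonneg _ _ hp0.le]
              exact ENNReal.le_tsum (f := fun n : ℕ => ((n + 1 : ℕ) : ℝ≥0∞) ^ p * r n x ^ p) n
      calc f x ^ p ≤ _ := ENNReal.rpow_le_rpow this hp0.le
        _ = _ := by rw [ENNReal.rpow_inv_rpow hp0.ne']
    have h2 : ∫⁻ x in G, f x ^ p ∂μ ≤ ∑' n : ℕ, (2⁻¹ : ℝ≥0∞) ^ n := by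
      calc ∫⁻ x in G, f x ^ p ∂μ ≤ ∫⁻ x, f x ^ p ∂μ := setLIntegral_le_lintegral _ _
        _ ≤ ∫⁻ x, ∑' n : ℕ, ((n + 1 : ℕ) : ℝ≥0∞) ^ p * r n x ^ p ∂μ := lintegral_mono h1
        _ = ∑' n : ℕ, ∫⁻ x, ((n + 1 : ℕ) : ℝ≥0∞) ^ p * r n x ^ p ∂μ :=
            lintegral_tsum fun n => (((hradm n).1.pow_const p).const_mul _).aemeasurable
        _ ≤ _ := by
            apply ENNReal.tsum_le_tsum
            intro n
            rw [lintegral_const_mul _ ((hradm n).1.pow_const p)]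
            calc ((n + 1 : ℕ) : ℝ≥0∞) ^ p * ∫⁻ x, r n x ^ p ∂μ
                ≤ ((n + 1 : ℕ) : ℝ≥0∞) ^ p * (((n + 1 : ℕ) : ℝ≥0∞)⁻¹ ^ p * (2⁻¹) ^ n) := by
                  gcongr; exact (hrint n).le
              _ = _ := by
                  rw [← mul_assoc, ← ENNReal.mul_rpow_of_nonneg _ _ hp0.le,
                    ENNReal.mul_inv_cancel (by simp) (ENNReal.natCast_ne_top _), ENNReal.one_rpow,
                    one_mul]
    refine ne_top_of_le_ne_top ?_ h2
    rw [ENNReal.tsum_geometric]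
    simp
  have : IsFiniteMeasure (μ.restrict G) := ⟨by rw [Measure.restrict_apply_univ]; exact hGfin.lt_top⟩
  obtain ⟨ρ, hlsc, hle, hInt⟩ := exists_lsc (μ.restrict G) hp0 hfm hfint
  refine ⟨ρ, hlsc, hInt, ?_⟩
  rintro x hx y hy ⟨K, γ, hγ, hγG, rfl, rfl, hfin⟩
  obtain ⟨ν, hν, hνle⟩ := exists_pathFamily hEF hγ hγG hx hy
  have hkey : ∀ n : ℕ, ((n + 1 : ℕ) : ℝ≥0∞) ≤ K * ∫⁻ t in Icc (0:ℝ) 1, ρ (γ t) := by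
    intro n
    calc ((n + 1 : ℕ) : ℝ≥0∞) = ((n + 1 : ℕ) : ℝ≥0∞) * 1 := (mul_one _).symm
      _ ≤ ((n + 1 : ℕ) : ℝ≥0∞) * ∫⁻ x, r n x ∂ν := by gcongr; exact (hradm n).2 ν hν
      _ = ∫⁻ x, ((n + 1 : ℕ) : ℝ≥0∞) * r n x ∂ν := (lintegral_const_mul _ (hradm n).1).symm
      _ ≤ ∫⁻ x, ρ x ∂ν := by
          apply lintegral_mono
          intro x
          exact le_trans (le_iSup (fun n : ℕ => ((n + 1 : ℕ) : ℝ≥0∞) * r n x) n) (hle x)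
      _ ≤ _ := hνle ρ hlsc.measurable
  obtain ⟨n, hn⟩ := ENNReal.exists_nat_gt (ENNReal.mul_ne_top ENNReal.coe_ne_top hfin :
    (K : ℝ≥0∞) * ∫⁻ t in Icc (0:ℝ) 1, ρ (γ t) ≠ ⊤)
  have := (hkey n).trans_lt hn
  norm_cast at this
  omega

/-- A set saturated under `ρ`-reachability is locally null or co-null. -/
theorem local_dichotomy {μ : Measure X} {Cμ : ℝ} (hD : IsDoublingWith μ Cμ)
    {CP lP : ℝ} (hlP : 1 ≤ lP) (hPI : WeakPoincare μ 1 CP lP)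
    {p : ℝ} (hp : 1 < p) {G A : Set X} (hG : IsOpen G) (hGfin : μ G ≠ ⊤) (hA : MeasurableSet A)
    {ρ : X → ℝ≥0∞} (hρ : Measurable ρ) (hInt : ∫⁻ x in G, ρ x ^ p ∂μ ≠ ⊤)
    (hsat : ∀ x y, Reach G ρ x y → (x ∈ A ↔ y ∈ A)) {x : X} (hx : x ∈ G) :
    ∃ r > 0, μ (ball x r ∩ A) = 0 ∨ μ (ball x r ∩ Aᶜ) = 0 := by
  have := isLocallyFinite hD
  obtain ⟨R, hR, hRG⟩ := Metric.nhds_basis_closedBall.mem_iff.1 (hG.mem_nhds hx)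
  set r := R / lP with hr
  have hlP0 : 0 < lP := by linarith
  have hr0 : 0 < r := by positivity
  have hlr : lP * r = R := by rw [hr]; field_simp
  have hBR : ball x r ⊆ ball x R := ball_subset_ball (by rw [← hlr]; nlinarith)
  have hBfin : μ (ball x r) ≠ ⊤ := (hD x r hr0).2.2.ne
  have hVfin : μ (ball x R) ≠ ⊤ := (hD x R hR).2.2.ne
  refine ⟨r, hr0, ?_⟩
  let v : X → ℝ := A.indicator (fun _ => (1:ℝ))
  have hv : LocallyIntegrable v μ := (locallyIntegrable_const (1:ℝ)).indicator hA
  have hρV : ∫⁻ y in ball x R, ρ y ∂μ ≠ ⊤ := by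
    have h1 : ∀ y, ρ y ≤ 1 + ρ y ^ p := by
      intro y
      rcases le_total (ρ y) 1 with h | h
      · exact h.trans le_self_add
      · calc ρ y = ρ y ^ (1:ℝ) := (ENNReal.rpow_one _).symm
          _ ≤ ρ y ^ p := ENNReal.rpow_le_rpow_of_exponent_le h hp.le
          _ ≤ _ := le_add_self
    refine ne_top_of_le_ne_top ?_ (lintegral_mono h1)
    rw [lintegral_add_left measurable_const, lintegral_const, one_mul, Measure.restrict_apply_univ]
    refine ENNReal.add_ne_top.2 ⟨hVfin, ne_top_of_le_ne_top hInt ?_⟩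
    exact lintegral_mono_set (ball_subset_closedBall.trans hRG)
  have hug : ∀ ε : ℝ≥0∞, ε ≠ 0 → IsUpperGradientOn v
      (fun y => ε * ρ y + (ball x R)ᶜ.indicator (fun _ => ⊤) y) univ := by
    intro ε hε L hL γ hγ _
    set J := ∫⁻ t in Icc (0:ℝ) L, (ε * ρ (γ t) + (ball x R)ᶜ.indicator (fun _ => (⊤:ℝ≥0∞)) (γ t))
      with hJ
    by_cases hJt : J = ⊤
    · rw [hJt]; exact le_top
    -- the curve stays in the closed ball
    have hin : MapsTo γ (Icc 0 L) G ∨ L = 0 := by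
      by_cases hL0 : L = 0
      · exact Or.inr hL0
      left
      have hLpos : 0 < L := lt_of_le_of_ne hL (Ne.symm hL0)
      by_contra hcon
      simp only [MapsTo, not_forall] at hcon
      obtain ⟨t0, ht0, ht0G⟩ := hcon
      have hout : γ t0 ∈ (closedBall x R)ᶜ := fun h => ht0G (hRG h)
      have hnh : ∀ᶠ t in 𝓝[Icc 0 L] t0, γ t ∈ (closedBall x R)ᶜ :=
        (hγ.continuousOn t0 ht0).eventually (isClosed_closedBall.isOpen_compl.mem_nhds hout)
      obtain ⟨η, hη, hηs⟩ := Metric.mem_nhdsWithin_iff.1 hnh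
      apply hJt
      have hpos : 0 < volume (ball t0 η ∩ Icc 0 L) := by
        have hne : (ball t0 η ∩ Ioo 0 L).Nonempty := by
          have : t0 ∈ closure (Ioo 0 L) := by rw [closure_Ioo hLpos.ne]; exact ht0
          exact mem_closure_iff.1 this (ball t0 η) isOpen_ball (mem_ball_self hη)
        refine lt_of_lt_of_le ((isOpen_ball.inter isOpen_Ioo).measure_pos volume hne) ?_
        exact measure_mono (inter_subset_inter_right _ Ioo_subset_Icc_self)
      rw [eq_top_iff]
      calc (⊤:ℝ≥0∞) = ⊤ * volume (ball t0 η ∩ Icc 0 L) := (ENNReal.top_mul hpos.ne').symm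
        _ = ∫⁻ t in ball t0 η ∩ Icc 0 L, (⊤:ℝ≥0∞) := by
            rw [setLIntegral_const]
        _ ≤ ∫⁻ t in ball t0 η ∩ Icc 0 L,
            (ε * ρ (γ t) + (ball x R)ᶜ.indicator (fun _ => (⊤:ℝ≥0∞)) (γ t)) := by
            apply setLIntegral_mono' (measurableSet_ball.inter measurableSet_Icc)
            intro t ht
            have : γ t ∈ (ball x R)ᶜ := fun h => hηs ht (ball_subset_closedBall h)
            rw [indicator_of_mem this]; simp
        _ ≤ J := lintegral_mono_set inter_subset_right
    rcases hin with hin | hL0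
    swap
    · subst hL0; simp
    by_cases hL0 : L = 0
    · subst hL0; simp
    have hfin : ∫⁻ t in Icc (0:ℝ) L, ρ (γ t) ≠ ⊤ := by
      intro htop
      apply hJt
      rw [eq_top_iff]
      have hc : ContinuousOn γ (Icc 0 L) := hγ.continuousOn
      calc (⊤:ℝ≥0∞) = ε * ∫⁻ t in Icc (0:ℝ) L, ρ (γ t) := by rw [htop, ENNReal.mul_top hε]
        _ ≤ ∫⁻ t in Icc (0:ℝ) L, ε * ρ (γ t) := lintegral_const_mul_le _ _
        _ ≤ J := lintegral_mono fun t => le_self_add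
    have hre := reach_of_curve hγ hin hfin (s := 0) (t := L) ⟨le_rfl, hL⟩ ⟨hL, le_rfl⟩ (Ne.symm hL0)
    have := hsat _ _ hre
    by_cases h0 : γ 0 ∈ A
    · have hl := this.1 h0
      simp [v, h0, hl]
    · have hl : γ L ∉ A := fun h => h0 (this.2 h)
      simp [v, h0, hl]
  have hzero : ENNReal.ofReal (⨍ y in ball x r, |v y - ⨍ z in ball x r, v z ∂μ| ∂μ) = 0 := by
    have hM : ∀ n : ℕ, ENNReal.ofReal (⨍ y in ball x r, |v y - ⨍ z in ball x r, v z ∂μ| ∂μ) ≤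
        (n + 1 : ℝ≥0∞)⁻¹ * (ENNReal.ofReal (CP * diam (ball x r)) * ⨍⁻ y in ball x R, ρ y ∂μ) := by
      intro n
      have h := hPI v hv _ ((hρ.const_mul ((n + 1 : ℝ≥0∞)⁻¹)).add
        (measurable_const.indicator measurableSet_ball.compl))
        (hug ((n + 1 : ℝ≥0∞)⁻¹) (by
          exact ENNReal.inv_ne_zero.2 (ENNReal.add_ne_top.2 ⟨ENNReal.natCast_ne_top n, ENNReal.one_ne_top⟩)))
        x r hr0
      refine h.trans (le_of_eq ?_)
      rw [hlr]
      simp only [ENNReal.rpow_one, one_div, inv_one, setLAverage_eq]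
      have : ∫⁻ y in ball x R, ((n + 1 : ℝ≥0∞)⁻¹ * ρ y + (ball x R)ᶜ.indicator (fun _ => ⊤) y) ∂μ
          = (n + 1 : ℝ≥0∞)⁻¹ * ∫⁻ y in ball x R, ρ y ∂μ := by
        rw [← lintegral_const_mul _ hρ]
        apply setLIntegral_congr_fun measurableSet_ball
        intro y hy
        simp [hy]
      simp only [Pi.add_apply]
      rw [this]
      rw [mul_div_assoc, ← mul_assoc, mul_comm (ENNReal.ofReal _), mul_assoc]
    have hMfin : ENNReal.ofReal (CP * diam (ball x r)) * ⨍⁻ y in ball x R, ρ y ∂μ ≠ ⊤ := by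
      refine ENNReal.mul_ne_top ENNReal.ofReal_ne_top ?_
      rw [setLAverage_eq]
      exact ENNReal.div_ne_top hρV (ball_pos hD x hR).ne'
    set M := ENNReal.ofReal (CP * diam (ball x r)) * ⨍⁻ y in ball x R, ρ y ∂μ
    have hlim : Tendsto (fun n : ℕ => (n + 1 : ℝ≥0∞)⁻¹ * M) atTop (𝓝 (0 * M)) := by
      apply ENNReal.Tendsto.mul_const _ (Or.inr hMfin)
      have := (tendsto_add_atTop_iff_nat 1).2 ENNReal.tendsto_inv_nat_nhds_zero
      simpa using this
    rw [zero_mul] at hlim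
    exact le_antisymm (ge_of_tendsto' hlim hM) zero_le
  set m := ⨍ z in ball x r, v z ∂μ
  have hInt0 : ∫ y in ball x r, |v y - m| ∂μ = 0 := by
    rw [setAverage_eq, ENNReal.ofReal_eq_zero, smul_eq_mul] at hzero
    have h1 : 0 ≤ ∫ y in ball x r, |v y - m| ∂μ := integral_nonneg fun y => abs_nonneg _
    have h2 : 0 < (μ.real (ball x r))⁻¹ := by
      rw [inv_pos, measureReal_def]
      exact ENNReal.toReal_pos (ball_pos hD x hr0).ne' hBfin
    nlinarith
  have hvi : Integrable (fun y => |v y - m|) (μ.restrict (ball x r)) := by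
    have : IsFiniteMeasure (μ.restrict (ball x r)) :=
      ⟨by rw [Measure.restrict_apply_univ]; exact hBfin.lt_top⟩
    exact (((integrable_const (1:ℝ)).indicator hA).sub (integrable_const m)).abs
  have hae := (integral_eq_zero_iff_of_nonneg (fun y => abs_nonneg _) hvi).1 hInt0
  by_cases hm : m = 0
  · left
    have : ∀ᵐ y ∂(μ.restrict (ball x r)), y ∉ A := by
      filter_upwards [hae] with y hy hyA
      simp [v, hyA, hm] at hy
    rw [ae_iff] at this
    simp only [not_not, ofPred_mem_eq] at this
    rwa [Measure.restrict_apply hA, inter_comm] at this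
  · right
    have : ∀ᵐ y ∂(μ.restrict (ball x r)), y ∈ A := by
      filter_upwards [hae] with y hy
      by_contra hyA
      simp [v, hyA] at hy
      exact hm hy
    rw [ae_iff] at this
    change μ.restrict (ball x r) Aᶜ = 0 at this
    rwa [Measure.restrict_apply hA.compl, inter_comm] at this

end SurfMod

namespace SurfMod
variable {X : Type*} [MetricSpace X] [MeasurableSpace X] [BorelSpace X]

theorem polar_of_null {μ : Measure X} {p : ℝ} (hp : 1 < p) {G D N : Set X} (hGfin : μ G ≠ ⊤)
    {ρ : X → ℝ≥0∞} (hρ : Measurable ρ) (hInt : ∫⁻ x in G, ρ x ^ p ∂μ ≠ ⊤)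
    (hN : MeasurableSet N) (hN0 : μ N = 0) (hDN : ∀ x ∈ D, ∀ y, Reach G ρ x y → y ∈ N) :
    ∃ h : X → ℝ≥0∞, LowerSemicontinuous h ∧ ∫⁻ x in G, h x ^ p ∂μ ≠ ⊤ ∧
      ∀ (K : ℝ≥0) (γ : ℝ → X) (T : ℝ), 0 < T → LipschitzWith K γ → (∀ t, γ t ∈ G) → γ 0 ∈ D →
        ∫⁻ t in Icc 0 T, h (γ t) = ⊤ := by
  have hp0 : 0 < p := by linarith
  have hm : Measurable (fun x => ρ x + N.indicator (fun _ => (⊤ : ℝ≥0∞)) x) :=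
    hρ.add (measurable_const.indicator hN)
  have hi : ∫⁻ x in G, (ρ x + N.indicator (fun _ => (⊤ : ℝ≥0∞)) x) ^ p ∂μ ≠ ⊤ := by
    have : ∫⁻ x in G, (ρ x + N.indicator (fun _ => (⊤ : ℝ≥0∞)) x) ^ p ∂μ =
        ∫⁻ x in G, ρ x ^ p ∂μ := by
      apply lintegral_congr_ae
      apply ae_restrict_of_ae
      have : ∀ᵐ x ∂μ, x ∉ N := measure_eq_zero_iff_ae_notMem.1 hN0
      filter_upwards [this] with x hx
      simp [hx]
    rw [this]; exact hInt
  have : IsFiniteMeasure (μ.restrict G) := ⟨by rw [Measure.restrict_apply_univ]; exact hGfin.lt_top⟩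
  obtain ⟨h, hlsc, hle, hhInt⟩ := exists_lsc (μ.restrict G) hp0 hm hi
  refine ⟨h, hlsc, hhInt, ?_⟩
  intro K γ T hT hγ hγG h0
  by_cases hfin : ∫⁻ t in Icc (0:ℝ) T, ρ (γ t) = ⊤
  · rw [eq_top_iff, ← hfin]
    exact lintegral_mono fun t => le_trans le_self_add (hle (γ t))
  · have hin : ∀ t ∈ Ioc 0 T, γ t ∈ N := by
      intro t ht
      exact hDN _ h0 _ (reach_of_curve hγ.lipschitzOnWith (fun t _ => hγG t) hfin
        ⟨le_rfl, hT.le⟩ ⟨ht.1.le, ht.2⟩ ht.1.ne)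
    rw [eq_top_iff]
    calc (⊤ : ℝ≥0∞) = ⊤ * volume (Ioc 0 T) := by
          rw [ENNReal.top_mul]; simpa using hT
      _ = ∫⁻ t in Ioc 0 T, (⊤:ℝ≥0∞) := by rw [setLIntegral_const]
      _ ≤ ∫⁻ t in Ioc 0 T, h (γ t) := by
          apply setLIntegral_mono' measurableSet_Ioc
          intro t ht
          refine le_trans ?_ (hle (γ t))
          simp [hin t ht]
      _ ≤ _ := lintegral_mono_set Ioc_subset_Icc_self

theorem exists_polar {μ : Measure X} {Cμ : ℝ} (hD : IsDoublingWith μ Cμ)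
    {CP lP : ℝ} (hlP : 1 ≤ lP) (hPI : WeakPoincare μ 1 CP lP)
    {p : ℝ} (hp : 1 < p) {E F G : Set X} (hG : IsDomainWithCompactClosure G) (hGfin : μ G ≠ ⊤)
    (hE : IsCompact E) (hEF : Disjoint E F) (hmod : modulus μ p (pathFamily E F G) = 0) :
    ∃ D, (D = E ∨ D = F) ∧ ∃ h : X → ℝ≥0∞, LowerSemicontinuous h ∧
      ∫⁻ x in G, h x ^ p ∂μ ≠ ⊤ ∧
      ∀ (K : ℝ≥0) (γ : ℝ → X) (T : ℝ), 0 < T → LipschitzWith K γ → (∀ t, γ t ∈ G) → γ 0 ∈ D →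
        ∫⁻ t in Icc 0 T, h (γ t) = ⊤ := by
  obtain ⟨ρ, hlsc, hInt, hno⟩ := exists_blowup μ hp hGfin hEF hmod
  set A := {y | ∃ x ∈ E, Reach G ρ x y} with hA
  have hAm : MeasurableSet A := measurable_reach hG.1 hG.2.2 hE hlsc
  have hsat : ∀ x y, Reach G ρ x y → (x ∈ A ↔ y ∈ A) := by
    intro x y hxy
    constructor
    · rintro ⟨e, he, h⟩; exact ⟨e, he, h.trans hxy⟩
    · rintro ⟨e, he, h⟩; exact ⟨e, he, h.trans hxy.symm⟩
  have hloc := fun x (hx : x ∈ G) => local_dichotomy hD hlP hPI hp hG.1 hGfin hAm hlsc.measurable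
    hInt hsat hx
  have hopen : ∀ B : Set X, IsOpen {x | ∃ r > 0, μ (ball x r ∩ B) = 0} := by
    intro B
    rw [Metric.isOpen_iff]
    rintro x ⟨r, hr, h⟩
    refine ⟨r / 2, by positivity, fun y hy => ⟨r / 2, by positivity, ?_⟩⟩
    refine measure_mono_null (inter_subset_inter_left _ ?_) h
    apply ball_subset_ball'
    rw [mem_ball] at hy
    linarith
  have hnull : ∀ B : Set X, MeasurableSet B → G ⊆ {x | ∃ r > 0, μ (ball x r ∩ B) = 0} →
      μ (G ∩ B) = 0 := by
    intro B hB hsub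
    have hGu : G ⊆ ⋃ n, exh G n := by
      intro x hx
      obtain ⟨n, hn⟩ := subset_exh hG.1 (isCompact_singleton (x := x)) (singleton_subset_iff.2 hx)
      exact mem_iUnion.2 ⟨n, hn rfl⟩
    rw [← Measure.restrict_apply' hB]
    refine measure_mono_null hGu (measure_iUnion_null fun n => ?_)
    apply (exh_compact hG.2.2 n).measure_zero_of_nhdsWithin
    intro a ha
    obtain ⟨r, hr, h⟩ := hsub (exh_subset G n ha)
    exact ⟨ball a r, mem_nhdsWithin_of_mem_nhds (ball_mem_nhds a hr), by
      rw [Measure.restrict_apply' hB]; exact h⟩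
  have hcov : G ⊆ {x | ∃ r > 0, μ (ball x r ∩ A) = 0} ∪ {x | ∃ r > 0, μ (ball x r ∩ Aᶜ) = 0} := by
    intro x hx
    obtain ⟨r, hr, h | h⟩ := hloc x hx
    · exact Or.inl ⟨r, hr, h⟩
    · exact Or.inr ⟨r, hr, h⟩
  have hdisj : ¬ (G ∩ ({x | ∃ r > 0, μ (ball x r ∩ A) = 0} ∩
      {x | ∃ r > 0, μ (ball x r ∩ Aᶜ) = 0})).Nonempty := by
    rintro ⟨x, -, ⟨r, hr, h⟩, ⟨s, hs, h'⟩⟩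
    have hpos := ball_pos hD x (lt_min hr hs)
    apply hpos.ne'
    rw [← nonpos_iff_eq_zero]
    calc μ (ball x (min r s)) ≤ μ ((ball x r ∩ A) ∪ (ball x s ∩ Aᶜ)) := by
          apply measure_mono
          intro y hy
          by_cases hyA : y ∈ A
          · exact Or.inl ⟨ball_subset_ball (min_le_left _ _) hy, hyA⟩
          · exact Or.inr ⟨ball_subset_ball (min_le_right _ _) hy, hyA⟩
      _ ≤ 0 := by
          refine (measure_union_le _ _).trans ?_
          rw [h, h']; simp
  by_cases hc1 : (G ∩ {x | ∃ r > 0, μ (ball x r ∩ Aᶜ) = 0}).Nonempty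
  · -- `A` has full measure in `G`
    have hsub : G ⊆ {x | ∃ r > 0, μ (ball x r ∩ Aᶜ) = 0} := by
      intro x hx
      rcases hcov hx with h | h
      · exact absurd (hG.2.1.isPreconnected _ _ (hopen A) (hopen Aᶜ) hcov ⟨x, hx, h⟩ hc1) hdisj
      · exact h
    refine ⟨F, Or.inr rfl, polar_of_null hp hGfin hlsc.measurable hInt
      (hG.1.measurableSet.inter hAm.compl) (hnull _ hAm.compl hsub) ?_⟩
    intro x hx y hxy
    constructor
    · obtain ⟨K, γ, _, h, _, rfl, _⟩ := hxy
      exact h 1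
    · rintro ⟨e, he, h⟩
      exact hno e he x hx (h.trans hxy.symm)
  · have hsub : G ⊆ {x | ∃ r > 0, μ (ball x r ∩ A) = 0} := by
      intro x hx
      rcases hcov hx with h | h
      · exact h
      · exact absurd ⟨x, hx, h⟩ hc1
    refine ⟨E, Or.inl rfl, polar_of_null hp hGfin hlsc.measurable hInt
      (hG.1.measurableSet.inter hAm) (hnull _ hAm hsub) ?_⟩
    intro x hx y hxy
    refine ⟨?_, x, hx, hxy⟩
    obtain ⟨K, γ, _, h, _, rfl, _⟩ := hxy
    exact h 1

/-- Costs of coarse curves from `D` to `x`. -/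
def coarseCosts (D : Set X) (f : X → ℝ≥0∞) (δ : ℝ) (x : X) : Set ℝ≥0∞ :=
  {c | ∃ L : ℝ, 0 ≤ L ∧ ∃ γ : ℝ → X, Measurable γ ∧ γ 0 ∈ D ∧ γ L = x ∧
    (∀ s ∈ Icc 0 L, ∀ t ∈ Icc 0 L, dist (γ s) (γ t) ≤ |s - t| + δ) ∧
    c = ∫⁻ t in Icc 0 L, f (γ t)}

noncomputable def coarseFn (D : Set X) (f : X → ℝ≥0∞) (δ : ℝ) (x : X) : ℝ≥0∞ :=
  min 1 (sInf (coarseCosts D f δ x))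

theorem coarseFn_step {D : Set X} {f : X → ℝ≥0∞} {δ : ℝ} (hδ : 0 < δ) {x y : X}
    (hxy : dist x y ≤ δ) :
    coarseFn D f δ y ≤ coarseFn D f δ x + f x * ENNReal.ofReal (dist x y) := by
  have key : ∀ c ∈ coarseCosts D f δ x,
      sInf (coarseCosts D f δ y) ≤ c + f x * ENNReal.ofReal (dist x y) := by
    rintro c ⟨L, hL, γ, hγm, hγ0, hγL, hγ, rfl⟩
    set d := dist x y with hd
    have hd0 : 0 ≤ d := dist_nonneg
    let σ : ℝ → X := fun t => if t < L then γ t else if t < L + d then x else y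
    have hσm : Measurable σ := Measurable.ite measurableSet_Iio hγm
      (Measurable.ite measurableSet_Iio measurable_const measurable_const)
    have hσγ : ∀ t ≤ L, σ t = γ t := by
      intro t ht
      simp only [σ]
      rcases ht.lt_or_eq with h | h
      · simp [h]
      · subst h
        by_cases hd' : 0 < d
        · simp [hd', hγL]
        · have : d = 0 := le_antisymm (not_lt.1 hd') hd0
          have hxy' : x = y := dist_eq_zero.1 this
          simp [this, hγL, hxy']
    have hσx : ∀ t, L ≤ t → t < L + d → σ t = x := by
      intro t h1 h2
      simp [σ, not_lt.2 h1, h2]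
    have hσy : σ (L + d) = y := by
      simp [σ, hd0]
    refine le_trans (sInf_le ⟨L + d, by linarith, σ, hσm, ?_, hσy, ?_, rfl⟩) ?_
    · rw [hσγ 0 hL]; exact hγ0
    · have hle : ∀ s ∈ Icc 0 (L + d), ∀ t ∈ Icc 0 (L + d), s ≤ t →
          dist (σ s) (σ t) ≤ |s - t| + δ := by
        intro s hs t ht hst
        rw [abs_of_nonpos (by linarith)]
        by_cases hsL : s ≤ L
        · have h1 : dist (γ s) x ≤ (L - s) + δ := by
            have := hγ s ⟨hs.1, hsL⟩ L ⟨hL, le_rfl⟩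
            rw [hγL, abs_of_nonpos (by linarith)] at this
            linarith
          rw [hσγ s hsL]
          by_cases htL : t ≤ L
          · rw [hσγ t htL]
            have := hγ s ⟨hs.1, hsL⟩ t ⟨ht.1, htL⟩
            rwa [abs_of_nonpos (by linarith)] at this
          · push Not at htL
            rcases ht.2.lt_or_eq with h | h
            · rw [hσx t htL.le h]; linarith
            · rw [h, hσy]
              have := dist_triangle (γ s) x y
              linarith
        · push Not at hsL
          rcases hs.2.lt_or_eq with h | h
          · rw [hσx s hsL.le h]
            rcases ht.2.lt_or_eq with h' | h'
            · rw [hσx t (hsL.le.trans hst) h', dist_self]; linarith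
            · rw [h', hσy]; linarith
          · have : t = s := le_antisymm (by rw [h]; exact ht.2) hst
            rw [this, dist_self]; linarith
      intro s hs t ht
      rcases le_total s t with h | h
      · exact hle s hs t ht h
      · rw [dist_comm, abs_sub_comm]; exact hle t ht s hs h
    · have hsub : Icc 0 (L + d) = Icc 0 L ∪ Ioc L (L + d) :=
        (Icc_union_Ioc_eq_Icc hL (by linarith)).symm
      rw [hsub]
      refine (lintegral_union_le _ _ _).trans (add_le_add (le_of_eq ?_) (le_of_eq ?_))
      · apply setLIntegral_congr_fun measurableSet_Icc
        intro t ht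
        simp only; rw [hσγ t ht.2]
      · rw [setLIntegral_congr Ioo_ae_eq_Ioc.symm]
        have : ∫⁻ t in Ioo L (L + d), f (σ t) = ∫⁻ t in Ioo L (L + d), f x := by
          apply setLIntegral_congr_fun measurableSet_Ioo
          intro t ht
          simp only; rw [hσx t ht.1.le ht.2]
        rw [this, setLIntegral_const, Real.volume_Ioo]
        simp
  unfold coarseFn
  rcases le_total 1 (sInf (coarseCosts D f δ x)) with h | h
  · rw [min_eq_left h]
    exact (min_le_left _ _).trans le_self_add
  · rw [min_eq_right h]
    refine (min_le_right _ _).trans ?_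
    rw [ENNReal.sInf_add]
    exact le_iInf₂ fun c hc => key c hc

theorem coarseFn_zero {D : Set X} {f : X → ℝ≥0∞} {δ : ℝ} (hδ : 0 < δ) {x : X} (hx : x ∈ D) :
    coarseFn D f δ x = 0 := by
  have : sInf (coarseCosts D f δ x) ≤ 0 := by
    apply sInf_le
    refine ⟨0, le_rfl, fun _ => x, measurable_const, hx, rfl, ?_, ?_⟩
    · intro s _ t _
      rw [dist_self]; positivity
    · simp
  unfold coarseFn
  rw [nonpos_iff_eq_zero.1 this]; simp

/-- Regularised truncation of `h` from below at scale `δ`. -/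
noncomputable def lowReg (h : X → ℝ≥0∞) (M : ℝ≥0∞) (δ : ℝ) (x : X) : ℝ≥0∞ :=
  ⨅ y ∈ ball x δ, min M (h y)

theorem lowReg_measurable (h : X → ℝ≥0∞) (M : ℝ≥0∞) (δ : ℝ) : Measurable (lowReg h M δ) := by
  apply measurable_of_Iio
  intro c
  apply IsOpen.measurableSet
  have : lowReg h M δ ⁻¹' Iio c = ⋃ y ∈ {y | min M (h y) < c}, ball y δ := by
    ext x
    simp only [lowReg, mem_preimage, mem_Iio, iInf_lt_iff, mem_iUnion, mem_ball, exists_prop]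
    constructor
    · rintro ⟨y, h1, h2⟩; exact ⟨y, h2, by rwa [dist_comm]⟩
    · rintro ⟨y, h1, h2⟩; exact ⟨y, by rwa [dist_comm], h1⟩
  rw [this]
  exact isOpen_biUnion fun y _ => isOpen_ball

theorem coarseFn_eventually {D G : Set X} {r : ℝ} (hr : 0 < r)
    (hGc : IsCompact (closure G)) (hDG : cthickening r D ⊆ G) (hD : IsCompact D) {h : X → ℝ≥0∞}
    (hlsc : LowerSemicontinuous h)
    (hblow : ∀ (K : ℝ≥0) (γ : ℝ → X) (T : ℝ), 0 < T → LipschitzWith K γ → (∀ t, γ t ∈ G) →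
      γ 0 ∈ D → ∫⁻ t in Icc 0 T, h (γ t) = ⊤) :
    ∃ k : ℕ, ∀ x, r ≤ infDist x D → 1 ≤ coarseFn D (lowReg h k (1 / ((k:ℝ) + 1))) (1 / ((k:ℝ) + 1)) x := by
  by_contra hcon
  push Not at hcon
  choose x hxr hx1 using hcon
  have hx2 : ∀ k : ℕ, sInf (coarseCosts D (lowReg h k (1 / ((k:ℝ) + 1))) (1 / ((k:ℝ) + 1)) (x k)) < 1 := by
    intro k
    have := hx1 k
    unfold coarseFn at this
    rcases min_lt_iff.1 this with h | h
    · exact absurd h (lt_irrefl _)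
    · exact h
  simp only [sInf_lt_iff] at hx2
  choose c hc hc1 using hx2
  choose L hL γ hγm hγ0 hγL hγ hcost using hc
  obtain ⟨k0, hk0⟩ := exists_nat_one_div_lt (show 0 < r / 2 by positivity)
  have hδ : ∀ k, 1 / (((k0 + k : ℕ) : ℝ) + 1) ≤ r / 2 := by
    intro k
    refine le_trans ?_ hk0.le
    apply one_div_le_one_div_of_le (by positivity)
    push_cast
    linarith [(Nat.cast_nonneg k : (0:ℝ) ≤ k)]
  have hLr : ∀ k, r / 2 ≤ L (k0 + k) := by
    intro k
    have h1 := hγ (k0 + k) (L (k0 + k)) ⟨hL _, le_rfl⟩ 0 ⟨le_rfl, hL _⟩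
    have h2 := infDist_le_dist_of_mem (x := x (k0 + k)) (hγ0 (k0 + k))
    rw [hγL, sub_zero, abs_of_nonneg (hL _)] at h1
    have h3 := hxr (k0 + k)
    have h4 := hδ k
    linarith
  have hr2 : 0 ≤ r / 2 := by positivity
  have hV : IsCompact (cthickening r D) :=
    hGc.of_isClosed_subset isClosed_cthickening (hDG.trans subset_closure)
  have hmemI : ∀ k t, clamp (r / 2) t ∈ Icc 0 (L (k0 + k)) := fun k t =>
    ⟨(clamp_mem hr2 t).1, (clamp_mem hr2 t).2.trans (hLr k)⟩
  have hlim0 : Tendsto (fun k : ℕ => 1 / (((k0 + k : ℕ) : ℝ) + 1)) atTop (𝓝 0) := by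
    have := (tendsto_add_atTop_iff_nat k0).2 (tendsto_one_div_add_atTop_nhds_zero_nat (𝕜 := ℝ))
    simpa [add_comm] using this
  obtain ⟨σ, φ, hφ, hσ, hσV, hσL⟩ := curve_limit hV (fun k t => γ (k0 + k) (clamp (r / 2) t))
    (by
      intro k t
      apply mem_cthickening_of_dist_le _ _ _ _ (hγ0 (k0 + k))
      have h1 := hγ (k0 + k) _ (hmemI k t) 0 ⟨le_rfl, hL _⟩
      rw [sub_zero, abs_of_nonneg (clamp_mem hr2 t).1] at h1
      have := (clamp_mem hr2 t).2
      have := hδ k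
      linarith) (fun _ => 1) (fun k : ℕ => 1 / (((k0 + k : ℕ) : ℝ) + 1)) 1 tendsto_const_nhds hlim0
    (by
      intro k s t
      have h1 := hγ (k0 + k) _ (hmemI k s) _ (hmemI k t)
      have := clamp_sub_le (r / 2) s t
      linarith)
  have hσ0 : σ 0 ∈ D := by
    apply hD.isClosed.mem_of_tendsto (hσ 0)
    refine Eventually.of_forall fun k => ?_
    have : clamp (r / 2) 0 = 0 := clamp_of_mem ⟨le_rfl, hr2⟩
    simp only [this]
    exact hγ0 _
  have hinf := hblow 1 σ (r / 2) (by positivity) (LipschitzWith.of_dist_le_mul (by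
    intro s t
    simpa [Real.dist_eq] using hσL s t)) (fun t => hDG (hσV t)) hσ0
  set N : ℕ → ℕ := fun k => k0 + φ k with hN
  have hNt : Tendsto N atTop atTop := tendsto_atTop_mono (fun k => by
    have := hφ.id_le k
    simp only [N, id] at *
    omega) tendsto_id
  set f : ℕ → ℝ → ℝ≥0∞ := fun k t =>
    lowReg h (N k) (1 / ((N k : ℝ) + 1)) (γ (N k) (clamp (r / 2) t)) with hf
  have hclm : Measurable (clamp (r / 2)) := by
    unfold clamp
    fun_prop
  have hfm : ∀ k, Measurable (f k) := fun k =>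
    (lowReg_measurable h _ _).comp ((hγm _).comp hclm)
  have hpt : ∀ t, h (σ t) ≤ liminf (fun k => f k t) atTop := by
    intro t
    apply le_of_forall_lt
    intro c hc'
    obtain ⟨c', hcc', hc'h⟩ := exists_between hc'
    refine hcc'.trans_le (le_liminf_of_le (by isBoundedDefault) ?_)
    obtain ⟨η, hη, hball⟩ := Metric.eventually_nhds_iff.1 (hlsc (σ t) c' hc'h)
    have e1 : ∀ᶠ k in atTop, dist (γ (N k) (clamp (r / 2) t)) (σ t) < η / 2 :=
      (Metric.tendsto_nhds.1 (hσ t)) _ (by positivity)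
    have e2 : ∀ᶠ k in atTop, 1 / ((N k : ℝ) + 1) < η / 2 :=
      ((tendsto_one_div_add_atTop_nhds_zero_nat (𝕜 := ℝ)).comp hNt).eventually
        (gt_mem_nhds (by positivity))
    have e3 : ∀ᶠ k in atTop, c' < (N k : ℝ≥0∞) :=
      (ENNReal.tendsto_nat_nhds_top.comp hNt).eventually (lt_mem_nhds (hc'h.trans_le le_top))
    filter_upwards [e1, e2, e3] with k h1 h2 h3
    simp only [f, lowReg]
    refine le_iInf₂ fun y hy => le_min h3.le (le_of_lt (hball ?_))
    rw [mem_ball] at hy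
    have := dist_triangle y (γ (N k) (clamp (r / 2) t)) (σ t)
    linarith
  have hInt : ∀ k, ∫⁻ t in Icc 0 (r / 2), f k t ≤ 1 := by
    intro k
    calc ∫⁻ t in Icc 0 (r / 2), f k t
        = ∫⁻ t in Icc 0 (r / 2), lowReg h (N k) (1 / ((N k : ℝ) + 1)) (γ (N k) t) := by
          apply setLIntegral_congr_fun measurableSet_Icc
          intro t ht
          simp only [f]
          rw [clamp_of_mem ht]
      _ ≤ ∫⁻ t in Icc 0 (L (N k)), lowReg h (N k) (1 / ((N k : ℝ) + 1)) (γ (N k) t) :=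
          lintegral_mono_set (Icc_subset_Icc_right (hLr _))
      _ ≤ 1 := by
          rw [← hcost]
          exact (hc1 _).le
  have : (⊤ : ℝ≥0∞) ≤ 1 := by
    rw [← hinf]
    calc ∫⁻ t in Icc 0 (r / 2), h (σ t)
        ≤ ∫⁻ t in Icc 0 (r / 2), liminf (fun k => f k t) atTop := lintegral_mono fun t => hpt t
      _ ≤ liminf (fun k => ∫⁻ t in Icc 0 (r / 2), f k t) atTop := lintegral_liminf_le hfm
      _ ≤ 1 := by
          refine liminf_le_of_frequently_le' ?_
          exact Frequently.of_forall hInt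
  simp at this

end SurfMod

namespace SurfMod
variable {X : Type*} [MetricSpace X] [MeasurableSpace X] [BorelSpace X]

theorem ofReal_abs_toReal_sub_le {a b e : ℝ≥0∞} (ha : a ≠ ⊤) (hb : b ≠ ⊤) (h1 : a ≤ b + e)
    (h2 : b ≤ a + e) : ENNReal.ofReal |a.toReal - b.toReal| ≤ e := by
  rcases eq_or_ne e ⊤ with rfl | he
  · exact le_top
  apply ENNReal.ofReal_le_of_le_toReal
  have h3 := ENNReal.toReal_mono (ENNReal.add_ne_top.2 ⟨hb, he⟩) h1
  have h4 := ENNReal.toReal_mono (ENNReal.add_ne_top.2 ⟨ha, he⟩) h2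
  rw [ENNReal.toReal_add hb he] at h3
  rw [ENNReal.toReal_add ha he] at h4
  rw [abs_le]
  constructor <;> linarith

theorem coarse_function {D G : Set X} {r : ℝ} (hr : 0 < r)
    (hGc : IsCompact (closure G)) (hDG : cthickening r D ⊆ G) (hD : IsCompact D) {h : X → ℝ≥0∞}
    (hlsc : LowerSemicontinuous h)
    (hblow : ∀ (K : ℝ≥0) (γ : ℝ → X) (T : ℝ), 0 < T → LipschitzWith K γ → (∀ t, γ t ∈ G) →
      γ 0 ∈ D → ∫⁻ t in Icc 0 T, h (γ t) = ⊤) :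
    ∃ u : X → ℝ, ∃ δ > 0, Continuous u ∧ (∀ x ∈ D, u x = 0) ∧ (∀ x, r ≤ infDist x D → u x = 1) ∧
      ∀ x s, 0 < s → s ≤ δ → ∀ y ∈ ball x s, ∀ w ∈ ball x s,
        ENNReal.ofReal |u y - u x| ≤ h w * ENNReal.ofReal s := by
  obtain ⟨k, hk⟩ := coarseFn_eventually hr hGc hDG hD hlsc hblow
  set d : ℝ := 1 / ((k : ℝ) + 1) with hd
  have hd0 : 0 < d := by positivity
  set f := lowReg h k d with hf
  set v := coarseFn D f d with hv
  have hv1 : ∀ x, v x ≤ 1 := fun x => min_le_left _ _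
  have hvt : ∀ x, v x ≠ ⊤ := fun x => ne_top_of_le_ne_top one_ne_top (hv1 x)
  have hfk : ∀ x, f x ≤ k := fun x =>
    (iInf₂_le x (mem_ball_self hd0)).trans (min_le_left _ _)
  have hosc : ∀ x y c, dist y x ≤ d → f x ≤ c → f y ≤ c →
      ENNReal.ofReal |(v y).toReal - (v x).toReal| ≤ c * ENNReal.ofReal (dist y x) := by
    intro x y c hxy hx hy
    apply ofReal_abs_toReal_sub_le (hvt y) (hvt x)
    · have := coarseFn_step (D := D) (f := f) hd0 (x := x) (y := y) (by rwa [dist_comm])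
      rw [dist_comm x y] at this
      refine this.trans ?_
      gcongr
    · have := coarseFn_step (D := D) (f := f) hd0 (x := y) (y := x) hxy
      refine this.trans ?_
      gcongr
  refine ⟨fun x => (v x).toReal, d / 2, by positivity, ?_, ?_, ?_, ?_⟩
  · rw [continuous_iff_continuousAt]
    intro x
    rw [ContinuousAt, tendsto_iff_dist_tendsto_zero]
    have hlim : Tendsto (fun y => (k : ℝ) * dist y x) (𝓝 x) (𝓝 0) := by
      have : Continuous (fun y => (k : ℝ) * dist y x) := by fun_prop
      simpa using this.tendsto x
    refine squeeze_zero' (Eventually.of_forall fun _ => dist_nonneg) ?_ hlim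
    filter_upwards [ball_mem_nhds x hd0] with y hy
    have := hosc x y k (mem_ball.1 hy).le (hfk x) (hfk y)
    rw [Real.dist_eq]
    rw [← ENNReal.ofReal_natCast, ← ENNReal.ofReal_mul (by positivity)] at this
    exact (ENNReal.ofReal_le_ofReal_iff (by positivity)).1 this
  · intro x hx
    simp only [hv, coarseFn_zero hd0 hx, ENNReal.toReal_zero]
  · intro x hx
    simp only [le_antisymm (hv1 x) (hk x hx), ENNReal.toReal_one]
  · intro x s hs hsd y hy w hw
    have hyx := mem_ball.1 hy
    have hwx := mem_ball.1 hw
    have h1 : f x ≤ h w := by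
      refine (iInf₂_le w ?_).trans (min_le_right _ _)
      rw [mem_ball]; linarith
    have h2 : f y ≤ h w := by
      refine (iInf₂_le w ?_).trans (min_le_right _ _)
      rw [mem_ball]
      have := dist_triangle_right w y x
      linarith
    refine (hosc x y (h w) (by linarith) h1 h2).trans ?_
    gcongr

theorem level_cover {μ : Measure X} {Cμ : ℝ} (hD : IsDoublingWith μ Cμ) {U : Set X}
    (hU : IsOpen U) (hUfin : μ U ≠ ⊤) {u : X → ℝ} {h : X → ℝ≥0∞} {δ : ℝ} (hδ : 0 < δ)
    (hosc : ∀ x s, 0 < s → s ≤ δ → ∀ y ∈ ball x s, ∀ w ∈ ball x s,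
        ENNReal.ofReal |u y - u x| ≤ h w * ENNReal.ofReal s) {δ' : ℝ} (hδ' : 0 < δ') :
    ∃ I : Set X, I.Countable ∧ ∃ R : X → ℝ, (∀ x ∈ I, 0 < R x ∧ R x ≤ δ') ∧
      U ⊆ ⋃ x ∈ I, ball x (R x) ∧ ∃ o : X → ℝ≥0∞,
        (∀ x ∈ I, ∀ y ∈ ball x (R x), u y ∈ closedEBall (u x) (o x)) ∧
        ∑' x : I, μ (ball x (R x)) / ENNReal.ofReal (R x) * volume (closedEBall (u x) (o x)) ≤
          2 * ENNReal.ofReal Cμ ^ 3 * ∫⁻ x in U, h x ∂μ := by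
  have hr : ∀ x, ∃ r : ℝ, 0 < r ∧ 6 * r ≤ min δ δ' ∧ (x ∈ U → closedBall x r ⊆ U) := by
    intro x
    by_cases hx : x ∈ U
    · obtain ⟨e, he, hsub⟩ := Metric.nhds_basis_closedBall.mem_iff.1 (hU.mem_nhds hx)
      refine ⟨min e (min δ δ' / 6), by positivity, ?_, fun _ => ?_⟩
      · have := min_le_right e (min δ δ' / 6)
        linarith
      · exact (closedBall_subset_closedBall (min_le_left _ _)).trans hsub
    · exact ⟨min δ δ' / 6, by positivity, by linarith, fun h => absurd h hx⟩
  choose r hr0 hr6 hrU using hr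
  obtain ⟨I, hIU, hdisj, hcov⟩ := Vitali.exists_disjoint_subfamily_covering_enlargement_closedBall
    U id r δ (fun a _ => by
      have := hr6 a; have := hr0 a; have := min_le_left δ δ'; linarith) 5 (by norm_num)
  simp only [id] at hdisj hcov
  have hpd : Pairwise (Function.onFun Disjoint fun x : I => closedBall (x : X) (r x)) :=
    (pairwise_subtype_iff_pairwise_set I (Function.onFun Disjoint fun x => closedBall x (r x))).2 hdisj
  have hIc : I.Countable := by
    have := Measure.countable_meas_pos_of_disjoint_of_meas_iUnion_ne_top μ
      (As := fun x : I => closedBall (x : X) (r x)) (fun i => measurableSet_closedBall) hpd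
      (ne_top_of_le_ne_top hUfin (measure_mono (iUnion_subset fun i => hrU i (hIU i.2))))
    have huniv : {i : I | 0 < μ (closedBall (i : X) (r i))} = univ := by
      ext i
      simp only [mem_univ, iff_true]
      exact (ball_pos hD _ (hr0 i)).trans_le (measure_mono ball_subset_closedBall)
    rw [huniv] at this
    exact countable_coe_iff.1 (countable_univ_iff.1 this)
  have : Countable I := hIc
  set R : X → ℝ := fun x => 6 * r x with hR
  have hR0 : ∀ x, 0 < R x := fun x => by have := hr0 x; positivity
  set m : X → ℝ≥0∞ := fun x => ⨅ w ∈ ball x (R x), h w with hm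
  have hRe : ∀ x, ENNReal.ofReal (R x) ≠ 0 := fun x => by simpa using hR0 x
  refine ⟨I, hIc, R, fun x _ => ⟨hR0 x, (hr6 x).trans (min_le_right _ _)⟩, ?_,
    fun x => m x * ENNReal.ofReal (R x), ?_, ?_⟩
  · intro x hx
    obtain ⟨b, hb, hsub⟩ := hcov x hx
    have := hsub (mem_closedBall_self (hr0 x).le)
    rw [mem_closedBall] at this
    refine mem_iUnion₂.2 ⟨b, hb, ?_⟩
    rw [mem_ball]
    have := hr0 b
    simp only [R]
    linarith
  · intro x _ y hy
    rw [mem_closedEBall, edist_dist, Real.dist_eq, ← ENNReal.div_le_iff (hRe x) ofReal_ne_top]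
    refine le_iInf₂ fun w hw => ?_
    rw [ENNReal.div_le_iff (hRe x) ofReal_ne_top]
    exact hosc x (R x) (hR0 x) ((hr6 x).trans (min_le_left _ _)) y hy w hw
  · have hterm : ∀ x : I, μ (ball (x : X) (R x)) / ENNReal.ofReal (R x) *
        volume (closedEBall (u x) (m x * ENNReal.ofReal (R x))) ≤
        2 * ENNReal.ofReal Cμ ^ 3 * ∫⁻ y in closedBall (x : X) (r x), h y ∂μ := by
      intro x
      rw [Real.volume_closedEBall]
      have hdoub : μ (ball (x : X) (R x)) ≤ ENNReal.ofReal Cμ ^ 3 * μ (ball (x : X) (r x)) := by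
        have h1 := (hD x (r x) (hr0 x)).2.1
        have h2 := (hD x (2 * r x) (by have := hr0 x; positivity)).2.1
        have h3 := (hD x (2 * (2 * r x)) (by have := hr0 x; positivity)).2.1
        calc μ (ball (x : X) (R x)) ≤ μ (ball (x : X) (2 * (2 * (2 * r x)))) := by
              apply measure_mono
              apply ball_subset_ball
              have := hr0 x
              simp only [R]; linarith
          _ ≤ ENNReal.ofReal Cμ * (ENNReal.ofReal Cμ * (ENNReal.ofReal Cμ * μ (ball (x:X) (r x)))) :=
              h3.trans (mul_le_mul_right (h2.trans (mul_le_mul_right h1 _)) _)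
          _ = _ := by ring
      have hInt : m x * μ (ball (x : X) (r x)) ≤ ∫⁻ y in closedBall (x : X) (r x), h y ∂μ := by
        rw [← setLIntegral_const]
        refine (setLIntegral_mono' measurableSet_ball fun y hy => ?_).trans
          (lintegral_mono_set ball_subset_closedBall)
        refine iInf₂_le y (ball_subset_ball ?_ hy)
        have := hr0 x
        simp only [R]; linarith
      calc μ (ball (x : X) (R x)) / ENNReal.ofReal (R x) * (2 * (m x * ENNReal.ofReal (R x)))
          = 2 * m x * (ENNReal.ofReal (R x) * (μ (ball (x : X) (R x)) / ENNReal.ofReal (R x))) := by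
            ring
        _ = 2 * m x * μ (ball (x : X) (R x)) := by
            rw [ENNReal.mul_div_cancel (hRe x) ofReal_ne_top]
        _ ≤ 2 * m x * (ENNReal.ofReal Cμ ^ 3 * μ (ball (x : X) (r x))) := by gcongr
        _ = 2 * ENNReal.ofReal Cμ ^ 3 * (m x * μ (ball (x : X) (r x))) := by ring
        _ ≤ _ := by gcongr
    refine (ENNReal.tsum_le_tsum hterm).trans ?_
    rw [ENNReal.tsum_mul_left, ← lintegral_iUnion (fun i : I => measurableSet_closedBall) hpd]
    gcongr
    exact iUnion_subset fun i => hrU i (hIU i.2)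

theorem level_cover' {μ : Measure X} {Cμ : ℝ} (hD : IsDoublingWith μ Cμ) {U : Set X}
    (hU : IsOpen U) (hUfin : μ U ≠ ⊤) {u : X → ℝ} {h : X → ℝ≥0∞} {δ : ℝ} (hδ : 0 < δ)
    (hosc : ∀ x s, 0 < s → s ≤ δ → ∀ y ∈ ball x s, ∀ w ∈ ball x s,
        ENNReal.ofReal |u y - u x| ≤ h w * ENNReal.ofReal s) {δ' : ℝ} (hδ' : 0 < δ') :
    ∃ Ψ : ℝ → ℝ≥0∞, Measurable Ψ ∧ ∫⁻ t, Ψ t ≤ 2 * ENNReal.ofReal Cμ ^ 3 * ∫⁻ x in U, h x ∂μ ∧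
      ∀ t, ∃ I : Set X, I.Countable ∧ ∃ R : X → ℝ, (∀ x ∈ I, 0 < R x ∧ R x ≤ δ') ∧
        U ∩ u ⁻¹' {t} ⊆ ⋃ x ∈ I, ball x (R x) ∧
        ∑' x : I, μ (ball x (R x)) / ENNReal.ofReal (R x) ≤ Ψ t := by
  obtain ⟨I, hIc, R, hR, hcov, o, ho, hsum⟩ := level_cover hD hU hUfin hδ hosc hδ'
  have : Countable I := hIc
  set J : X → Set ℝ := fun x => closedEBall (u x) (o x) with hJ
  have hJm : ∀ x, MeasurableSet (J x) := fun x => isClosed_closedEBall.measurableSet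
  set a : X → ℝ≥0∞ := fun x => μ (ball x (R x)) / ENNReal.ofReal (R x) with ha
  have hmeas : ∀ x : I, Measurable ((J x).indicator fun _ => a x) := fun x =>
    measurable_const.indicator (hJm x)
  refine ⟨fun t => ∑' x : I, (J x).indicator (fun _ => a x) t, ?_, ?_, ?_⟩
  · exact Measurable.tsum hmeas
  · rw [lintegral_tsum fun x => (hmeas x).aemeasurable]
    refine le_trans (ENNReal.tsum_le_tsum fun x => ?_) hsum
    rw [lintegral_indicator_const (hJm x)]
  · intro t
    refine ⟨{x ∈ I | t ∈ J x}, hIc.mono (sep_subset _ _), R, fun x hx => hR x hx.1, ?_, ?_⟩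
    · rintro y ⟨hyU, hyt⟩
      obtain ⟨x, hx, hyx⟩ := mem_iUnion₂.1 (hcov hyU)
      refine mem_iUnion₂.2 ⟨x, ⟨hx, ?_⟩, hyx⟩
      have := ho x hx y hyx
      rwa [show u y = t from hyt] at this
    · simp only
      rw [tsum_subtype {x ∈ I | t ∈ J x} a, tsum_subtype I (fun x => (J x).indicator (fun _ => a x) t)]
      refine ENNReal.tsum_le_tsum fun x => ?_
      by_cases h1 : x ∈ I <;> by_cases h2 : t ∈ J x <;> simp [h1, h2]

theorem cover_bound {μ : Measure X}
    (hpad : ∀ η : ℝ≥0∞, 0 < η → ∀ δ : ℝ, 0 < δ → ∃ x : X, ∃ r : ℝ, 0 < r ∧ r ≤ δ ∧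
      μ (ball x r) / ENNReal.ofReal r < η)
    {A I : Set X} (hI : I.Countable) {R : X → ℝ} {δ : ℝ} (hδ : 0 < δ)
    (hR : ∀ x ∈ I, 0 < R x ∧ R x ≤ δ) (hcov : A ⊆ ⋃ x ∈ I, ball x (R x)) {ε : ℝ≥0∞} (hε : 0 < ε) :
    (⨅ (c : ℕ → X) (r : ℕ → ℝ) (_ : A ⊆ ⋃ i, ball (c i) (r i))
      (_ : ∀ i, 0 < r i ∧ r i ≤ δ), ∑' i, μ (ball (c i) (r i)) / ENNReal.ofReal (r i)) ≤
      ∑' x : I, μ (ball x (R x)) / ENNReal.ofReal (R x) + ε := by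
  have : Countable I := hI
  obtain ⟨η, hη0, hη⟩ := ENNReal.exists_pos_sum_of_countable' hε.ne' ℕ
  choose z s hs0 hsδ hsη using fun i => hpad (η i) (hη0 i) δ hδ
  obtain ⟨hden⟩ := nonempty_denumerable (I ⊕ ℕ)
  let e : ℕ ≃ I ⊕ ℕ := (Denumerable.eqv (I ⊕ ℕ)).symm
  let C : I ⊕ ℕ → X := Sum.elim (fun x => (x : X)) z
  let S : I ⊕ ℕ → ℝ := Sum.elim (fun x => R x) s
  refine iInf_le_of_le (fun i => C (e i)) (iInf_le_of_le (fun i => S (e i))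
    (iInf_le_of_le ?_ (iInf_le_of_le ?_ ?_)))
  · intro y hy
    obtain ⟨x, hx, hyx⟩ := mem_iUnion₂.1 (hcov hy)
    refine mem_iUnion.2 ⟨e.symm (Sum.inl ⟨x, hx⟩), ?_⟩
    simpa [C, S] using hyx
  · intro i
    simp only
    rcases e i with x | j
    · exact hR x x.2
    · exact ⟨hs0 j, hsδ j⟩
  · rw [Equiv.tsum_eq e (fun j => μ (ball (C j) (S j)) / ENNReal.ofReal (S j)),
      Summable.tsum_sum ENNReal.summable ENNReal.summable]
    refine add_le_add le_rfl (le_trans (ENNReal.tsum_le_tsum fun i => ?_) hη.le)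
    exact (hsη i).le

theorem coarea {μ : Measure X} {Cμ : ℝ} (hD : IsDoublingWith μ Cμ)
    (hpad : ∀ η : ℝ≥0∞, 0 < η → ∀ δ : ℝ, 0 < δ → ∃ x : X, ∃ r : ℝ, 0 < r ∧ r ≤ δ ∧
      μ (ball x r) / ENNReal.ofReal r < η) {U : Set X}
    (hU : IsOpen U) (hUfin : μ U ≠ ⊤) {u : X → ℝ} {h : X → ℝ≥0∞} {δ : ℝ} (hδ : 0 < δ)
    (hosc : ∀ x s, 0 < s → s ≤ δ → ∀ y ∈ ball x s, ∀ w ∈ ball x s,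
        ENNReal.ofReal |u y - u x| ≤ h w * ENNReal.ofReal s) :
    ∃ ψ : ℝ → ℝ≥0∞, Measurable ψ ∧ (∀ t, codimOneHausdorff μ (U ∩ u ⁻¹' {t}) ≤ ψ t) ∧
      ∫⁻ t in Ioo 0 1, ψ t ≤ 2 * ENNReal.ofReal Cμ ^ 3 * ∫⁻ x in U, h x ∂μ := by
  choose Ψ hΨm hΨi hΨ using fun n : ℕ => level_cover' hD hU hUfin hδ hosc
    (δ' := 1 / ((n : ℝ) + 1)) (by positivity)
  set ε : ℕ → ℝ≥0∞ := fun n => ENNReal.ofReal (1 / ((n : ℝ) + 1)) with hε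
  have hε0 : ∀ n, 0 < ε n := fun n => by simp only [ε, ENNReal.ofReal_pos]; positivity
  have hεt : Tendsto ε atTop (𝓝 0) := by
    have := ENNReal.tendsto_ofReal (tendsto_one_div_add_atTop_nhds_zero_nat (𝕜 := ℝ))
    simpa [ε] using this
  refine ⟨fun t => liminf (fun n => Ψ n t + ε n) atTop,
    Measurable.liminf fun n => (hΨm n).add_const _, ?_, ?_⟩
  · intro t
    unfold codimOneHausdorff
    refine iSup₂_le fun d hd => le_liminf_of_le (by isBoundedDefault) ?_
    have e1 : ∀ᶠ n : ℕ in atTop, 1 / ((n : ℝ) + 1) < d :=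
      (tendsto_one_div_add_atTop_nhds_zero_nat (𝕜 := ℝ)).eventually (gt_mem_nhds hd)
    filter_upwards [e1] with n hn
    obtain ⟨I, hI, R, hR, hcov, hsum⟩ := hΨ n t
    refine (cover_bound hpad hI hd (fun x hx => ⟨(hR x hx).1, (hR x hx).2.trans hn.le⟩) hcov
      (hε0 n)).trans ?_
    gcongr
  · calc ∫⁻ t in Ioo (0:ℝ) 1, liminf (fun n => Ψ n t + ε n) atTop
        ≤ liminf (fun n => ∫⁻ t in Ioo (0:ℝ) 1, (Ψ n t + ε n)) atTop :=
          lintegral_liminf_le fun n => (hΨm n).add_const _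
      _ ≤ liminf (fun n => 2 * ENNReal.ofReal Cμ ^ 3 * ∫⁻ x in U, h x ∂μ + ε n) atTop := by
          refine liminf_le_liminf (Eventually.of_forall fun n => ?_)
          rw [lintegral_add_right _ measurable_const]
          refine add_le_add ((setLIntegral_le_lintegral _ _).trans (hΨi n)) (le_of_eq ?_)
          simp
      _ = 2 * ENNReal.ofReal Cμ ^ 3 * ∫⁻ x in U, h x ∂μ := by
          apply Tendsto.liminf_eq
          simpa using hεt.const_add (2 * ENNReal.ofReal Cμ ^ 3 * ∫⁻ x in U, h x ∂μ)

end SurfMod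

namespace SurfMod
variable {X : Type*} [MetricSpace X] [MeasurableSpace X] [BorelSpace X]

theorem separatesIn_symm {S E F G : Set X} (h : SeparatesIn S E F G) : SeparatesIn S F E G := by
  obtain ⟨x, hx, y, hy, h1, h2, h3⟩ := h
  exact ⟨y, hy, x, hx, h2, h1, h3.symm⟩

theorem separates_level {G D D' : Set X} (hDc : IsConnected D) (hDc' : IsConnected D')
    (hDG : D ⊆ G) (hDG' : D' ⊆ G) {u : X → ℝ} (hu : Continuous u) (hu0 : ∀ x ∈ D, u x = 0)
    (hu1 : ∀ x ∈ D', u x = 1) {t : ℝ} (ht : t ∈ Ioo (0:ℝ) 1) :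
    SeparatesIn (closure G ∩ u ⁻¹' {t}) D D' G := by
  set S := closure G ∩ u ⁻¹' {t} with hS
  have hD1 : D ⊆ G \ S := fun x hx => ⟨hDG hx, fun h => by
    have : u x = t := h.2
    rw [hu0 x hx] at this
    linarith [ht.1]⟩
  have hD2 : D' ⊆ G \ S := fun x hx => ⟨hDG' hx, fun h => by
    have : u x = t := h.2
    rw [hu1 x hx] at this
    linarith [ht.2]⟩
  obtain ⟨x, hx⟩ := hDc.nonempty
  obtain ⟨y, hy⟩ := hDc'.nonempty
  refine ⟨x, hD1 hx, y, hD2 hy, hDc.isPreconnected.subset_connectedComponentIn hx hD1,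
    hDc'.isPreconnected.subset_connectedComponentIn hy hD2, fun heq => ?_⟩
  have hxm : x ∈ connectedComponentIn (G \ S) x := mem_connectedComponentIn (hD1 hx)
  have hym : y ∈ connectedComponentIn (G \ S) x := by
    rw [heq]; exact mem_connectedComponentIn (hD2 hy)
  have himg := isPreconnected_connectedComponentIn.intermediate_value hxm hym hu.continuousOn
  rw [hu0 x hx, hu1 y hy] at himg
  obtain ⟨z, hz, hzt⟩ := himg ⟨ht.1.le, ht.2.le⟩
  have := connectedComponentIn_subset _ _ hz
  exact this.2 ⟨subset_closure this.1, hzt⟩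

theorem codimOneHausdorff_mono (μ : Measure X) {A B : Set X} (h : A ⊆ B) :
    codimOneHausdorff μ A ≤ codimOneHausdorff μ B := by
  unfold codimOneHausdorff
  refine iSup₂_mono fun δ _ => iInf₂_mono fun c r => ?_
  refine le_iInf fun h1 => le_iInf fun h2 => ?_
  exact iInf_le_of_le (h.trans h1) (iInf_le_of_le h2 le_rfl)

theorem codimIntegral_le (μ : Measure X) (A : Set X) (g : X → ℝ≥0∞) :
    codimIntegral μ A g ≤ ∑' n : ℕ, codimOneHausdorff μ (A ∩ {x | (n : ℝ≥0∞) < g x}) := by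
  unfold codimIntegral
  have hsub : Ioi (0:ℝ) ⊆ ⋃ n : ℕ, Ico (n : ℝ) (n + 1) := by
    intro s hs
    exact mem_iUnion.2 ⟨⌊s⌋₊, Nat.floor_le (le_of_lt hs), Nat.lt_floor_add_one s⟩
  refine (lintegral_mono_set hsub).trans ((lintegral_iUnion_le _ _).trans
    (ENNReal.tsum_le_tsum fun n => ?_))
  calc ∫⁻ s in Ico (n : ℝ) (n + 1), codimOneHausdorff μ (A ∩ {x | ENNReal.ofReal s < g x})
      ≤ ∫⁻ s in Ico (n : ℝ) (n + 1), codimOneHausdorff μ (A ∩ {x | (n : ℝ≥0∞) < g x}) := by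
        refine setLIntegral_mono' measurableSet_Ico fun s hs => ?_
        apply codimOneHausdorff_mono
        refine inter_subset_inter_right _ fun x hx => ?_
        have hx' : ENNReal.ofReal s < g x := hx
        refine lt_of_le_of_lt ?_ hx'
        rw [← ENNReal.ofReal_natCast]
        exact ENNReal.ofReal_le_ofReal hs.1
    _ = _ := by rw [setLIntegral_const]; simp

theorem tsum_indicator_le (g : ℝ≥0∞) :
    ∑' n : ℕ, (if (n : ℝ≥0∞) < g then (1 : ℝ≥0∞) else 0) ≤ g + 1 := by
  induction g with
  | top => simp
  | coe a =>
    have h : ∀ n : ℕ, ((n : ℝ≥0∞) < a ↔ n < ⌈a⌉₊) := fun n => by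
      rw [Nat.lt_ceil]; norm_cast
    simp only [h]
    rw [tsum_eq_sum (s := Finset.range ⌈a⌉₊) (fun n hn => by simpa using hn)]
    rw [Finset.sum_congr rfl (g := fun _ => 1) (fun n hn => if_pos (Finset.mem_range.1 hn))]
    simp only [Finset.sum_const, Finset.card_range, nsmul_eq_mul, mul_one]
    have := (Nat.ceil_lt_add_one (a := a) (zero_le)).le
    exact_mod_cast this

theorem pad {μ : Measure X} {Cμ : ℝ} (hD : IsDoublingWith μ Cμ) {G : Set X}
    (hG : IsOpen G) (hGfin : μ G ≠ ⊤) {h : X → ℝ≥0∞} (hInt : ∫⁻ x in G, h x ∂μ ≠ ⊤)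
    (hfun : ∀ ε : ℝ≥0, 0 < ε → ∃ u : X → ℝ, ∃ δ > 0, Ioo 0 1 ⊆ u '' G ∧
      ∀ x s, 0 < s → s ≤ δ → ∀ y ∈ ball x s, ∀ w ∈ ball x s,
        ENNReal.ofReal |u y - u x| ≤ ((ε : ℝ≥0∞) * h w) * ENNReal.ofReal s) :
    ∀ η : ℝ≥0∞, 0 < η → ∀ δ : ℝ, 0 < δ → ∃ x : X, ∃ r : ℝ, 0 < r ∧ r ≤ δ ∧
      μ (ball x r) / ENNReal.ofReal r < η := by
  intro η hη δ' hδ'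
  by_contra hcon
  push Not at hcon
  obtain ⟨ε, hε, hlt⟩ := ENNReal.exists_nnreal_pos_mul_lt
    (a := 2 * ENNReal.ofReal Cμ ^ 3 * ∫⁻ x in G, h x ∂μ)
    (ENNReal.mul_ne_top (by finiteness) hInt) hη.ne'
  obtain ⟨u, δ, hδ, hu, hosc⟩ := hfun ε hε
  obtain ⟨Ψ, hΨm, hΨi, hΨ⟩ := level_cover' hD hG hGfin hδ hosc hδ'
  have hlow : ∀ t ∈ Ioo (0:ℝ) 1, η ≤ Ψ t := by
    intro t ht
    obtain ⟨y, hy, hyt⟩ := hu ht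
    obtain ⟨I, hI, R, hR, hcov, hsum⟩ := hΨ t
    obtain ⟨x, hx, -⟩ := mem_iUnion₂.1 (hcov ⟨hy, hyt⟩)
    refine (hcon x (R x) (hR x hx).1 (hR x hx).2).trans (le_trans ?_ hsum)
    exact ENNReal.le_tsum (f := fun x : I => μ (ball (x : X) (R x)) / ENNReal.ofReal (R x)) ⟨x, hx⟩
  apply hlt.not_ge
  calc η = ∫⁻ t in Ioo (0:ℝ) 1, η := by simp
    _ ≤ ∫⁻ t in Ioo (0:ℝ) 1, Ψ t := setLIntegral_mono' measurableSet_Ioo hlow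
    _ ≤ ∫⁻ t, Ψ t := setLIntegral_le_lintegral _ _
    _ ≤ _ := hΨi
    _ = _ := by
      rw [lintegral_const_mul' _ _ ENNReal.coe_ne_top]
      ring

theorem final_core {μ : Measure X} {Cμ : ℝ} (hD : IsDoublingWith μ Cμ) {p q : ℝ}
    (hpq : p.HolderConjugate q) {G E F D D' : Set X}
    (hG : IsDomainWithCompactClosure G) (hGfin : μ G ≠ ⊤)
    (hDc : IsCompact D) (hDc' : IsCompact D') (hDk : IsConnected D) (hDk' : IsConnected D')
    (hDG : D ⊆ G) (hDG' : D' ⊆ G) (hDD : Disjoint D D')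
    (hsep : ∀ S, SeparatesIn S D D' G → SeparatesIn S E F G)
    {h : X → ℝ≥0∞} (hlsc : LowerSemicontinuous h) (hInt : ∫⁻ x in G, h x ^ p ∂μ ≠ ⊤)
    (hblow : ∀ (K : ℝ≥0) (γ : ℝ → X) (T : ℝ), 0 < T → LipschitzWith K γ → (∀ t, γ t ∈ G) →
      γ 0 ∈ D → ∫⁻ t in Icc 0 T, h (γ t) = ⊤)
    {g : X → ℝ≥0∞} (hg : Measurable g) (hgint : ∫⁻ x in G, g x ^ q ∂μ ≠ ⊤)
    (hadm : ∀ S ∈ surfaceSets μ E F G, 1 ≤ codimIntegral μ (S ∩ G) g) : False := by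
  have hp0 := hpq.pos
  have hq0 := hpq.symm.pos
  have : IsFiniteMeasure (μ.restrict G) := ⟨by simpa using hGfin.lt_top⟩
  obtain ⟨k, hklsc, hgk, hkint⟩ := exists_lsc (μ.restrict G) hq0 hg hgint
  have hopen : ∀ n : ℕ, IsOpen {x | (n : ℝ≥0∞) < k x} := fun n => hklsc.isOpen_preimage n
  -- integrability
  have hM : ∫⁻ x in G, h x * (k x + 1) ∂μ ≠ ⊤ := by
    have hy : ∀ x, h x * (k x + 1) ≤ (h x ^ p / ENNReal.ofReal p + k x ^ q / ENNReal.ofReal q) +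
        (h x ^ p / ENNReal.ofReal p + 1 ^ q / ENNReal.ofReal q) := by
      intro x
      rw [mul_add]
      exact add_le_add (ENNReal.young_inequality _ _ hpq) (ENNReal.young_inequality _ _ hpq)
    have hpi : (ENNReal.ofReal p)⁻¹ ≠ ⊤ := by simpa using hp0
    have hqi : (ENNReal.ofReal q)⁻¹ ≠ ⊤ := by simpa using hq0
    have hhm : Measurable h := hlsc.measurable
    have hkm : Measurable k := hklsc.measurable
    refine ne_top_of_le_ne_top ?_ (lintegral_mono hy)
    simp only [div_eq_mul_inv]
    rw [lintegral_add_left (by fun_prop), lintegral_add_left (by fun_prop),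
      lintegral_add_left (by fun_prop), lintegral_mul_const' _ _ hpi, lintegral_mul_const' _ _ hqi]
    refine ENNReal.add_ne_top.2 ⟨ENNReal.add_ne_top.2 ⟨ENNReal.mul_ne_top hInt hpi,
      ENNReal.mul_ne_top hkint hqi⟩, ENNReal.add_ne_top.2 ⟨ENNReal.mul_ne_top hInt hpi, ?_⟩⟩
    simp only [ENNReal.one_rpow, one_mul, lintegral_const]
    exact ENNReal.mul_ne_top hqi (measure_ne_top _ _)
  have hM1 : ∫⁻ x in G, h x ∂μ ≠ ⊤ := by
    refine ne_top_of_le_ne_top hM (lintegral_mono fun x => ?_)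
    calc h x = h x * 1 := (mul_one _).symm
      _ ≤ h x * (k x + 1) := by gcongr; exact le_add_self
  -- the test functions
  obtain ⟨r, hr, hrG⟩ := hDc.exists_cthickening_subset_open (hG.1.inter hDc'.isClosed.isOpen_compl)
    (fun x hx => ⟨hDG hx, fun hx' => (disjoint_left.1 hDD) hx hx'⟩)
  have hfun : ∀ ε : ℝ≥0, 0 < ε → ∃ u : X → ℝ, ∃ δ > 0, Continuous u ∧ (∀ x ∈ D, u x = 0) ∧
      (∀ x ∈ D', u x = 1) ∧
      ∀ x s, 0 < s → s ≤ δ → ∀ y ∈ ball x s, ∀ w ∈ ball x s,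
        ENNReal.ofReal |u y - u x| ≤ ((ε : ℝ≥0∞) * h w) * ENNReal.ofReal s := by
    intro ε hε
    obtain ⟨u, δ, hδ, huc, hu0, hu1, hosc⟩ := coarse_function (h := fun x => (ε : ℝ≥0∞) * h x)
      hr hG.2.2 (hrG.trans inter_subset_left) hDc
      ((ENNReal.continuous_const_mul ENNReal.coe_ne_top).comp_lowerSemicontinuous hlsc
        (fun a b hab => by simp only; gcongr))
      (by
        intro K γ T hT hγ hγG hγ0
        rw [lintegral_const_mul' _ _ ENNReal.coe_ne_top, hblow K γ T hT hγ hγG hγ0]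
        exact ENNReal.mul_top (by simpa using hε.ne'))
    refine ⟨u, δ, hδ, huc, hu0, fun x hx => hu1 x ?_, hosc⟩
    by_contra hlt
    push Not at hlt
    obtain ⟨z, hz, hxz⟩ := (infDist_lt_iff hDk.nonempty).1 hlt
    exact (hrG (mem_cthickening_of_dist_le _ _ _ _ hz hxz.le)).2 hx
  have hpad := pad hD hG.1 hGfin hM1 (by
    intro ε hε
    obtain ⟨u, δ, hδ, huc, hu0, hu1, hosc⟩ := hfun ε hε
    refine ⟨u, δ, hδ, ?_, hosc⟩
    obtain ⟨x, hx⟩ := hDk.nonempty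
    obtain ⟨y, hy⟩ := hDk'.nonempty
    have := hG.2.1.isPreconnected.intermediate_value (hDG hx) (hDG' hy) huc.continuousOn
    rw [hu0 x hx, hu1 y hy] at this
    exact Ioo_subset_Icc_self.trans this)
  have hC : 2 * ENNReal.ofReal Cμ ^ 3 ≠ ⊤ := by finiteness
  obtain ⟨ε, hε, hlt⟩ := ENNReal.exists_nnreal_pos_mul_lt
    (ENNReal.mul_ne_top hC hM) one_ne_zero
  obtain ⟨u, δ, hδ, huc, hu0, hu1, hosc⟩ := hfun ε hε
  obtain ⟨ψG, hψGm, hψG, hψGi⟩ := coarea hD hpad hG.1 hGfin hδ hosc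
  choose ψ hψm hψ hψi using fun n : ℕ => coarea hD hpad (hG.1.inter (hopen n))
    (ne_top_of_le_ne_top hGfin (measure_mono inter_subset_left)) hδ hosc
  have hae : ∀ᵐ t ∂(volume.restrict (Ioo (0:ℝ) 1)), ψG t < ⊤ := by
    refine ae_lt_top hψGm (ne_top_of_le_ne_top ?_ hψGi)
    rw [lintegral_const_mul' _ _ ENNReal.coe_ne_top]
    exact ENNReal.mul_ne_top hC (ENNReal.mul_ne_top ENNReal.coe_ne_top hM1)
  have hae2 : ∀ᵐ t ∂(volume.restrict (Ioo (0:ℝ) 1)), 1 ≤ ∑' n, ψ n t := by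
    filter_upwards [hae, ae_restrict_mem measurableSet_Ioo] with t ht htI
    have hSG : (closure G ∩ u ⁻¹' {t}) ∩ G ⊆ G ∩ u ⁻¹' {t} := fun x hx => ⟨hx.2, hx.1.2⟩
    refine (hadm (closure G ∩ u ⁻¹' {t}) ⟨?_, inter_subset_left, ?_, ?_⟩).trans ?_
    · exact hG.2.2.inter_right (isClosed_singleton.preimage huc)
    · exact ne_top_of_le_ne_top ht.ne ((codimOneHausdorff_mono μ hSG).trans (hψG t))
    · exact hsep _ (separates_level hDk hDk' hDG hDG' huc hu0 hu1 htI)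
    · refine (codimIntegral_le _ _ _).trans (ENNReal.tsum_le_tsum fun n => ?_)
      refine (codimOneHausdorff_mono μ ?_).trans (hψ n t)
      rintro x ⟨hx, hxn⟩
      exact ⟨⟨hx.2, lt_of_lt_of_le hxn (hgk x)⟩, hx.1.2⟩
  apply hlt.not_ge
  have hhm : Measurable h := hlsc.measurable
  calc (1 : ℝ≥0∞) = ∫⁻ t in Ioo (0:ℝ) 1, 1 := by simp
    _ ≤ ∫⁻ t in Ioo (0:ℝ) 1, ∑' n, ψ n t := lintegral_mono_ae hae2
    _ = ∑' n, ∫⁻ t in Ioo (0:ℝ) 1, ψ n t := lintegral_tsum fun n => (hψm n).aemeasurable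
    _ ≤ ∑' n : ℕ, 2 * ENNReal.ofReal Cμ ^ 3 *
          ∫⁻ x in G ∩ {x | (n : ℝ≥0∞) < k x}, (ε : ℝ≥0∞) * h x ∂μ := ENNReal.tsum_le_tsum hψi
    _ = ε * (2 * ENNReal.ofReal Cμ ^ 3 *
          ∑' n : ℕ, ∫⁻ x in G ∩ {x | (n : ℝ≥0∞) < k x}, h x ∂μ) := by
        rw [← ENNReal.tsum_mul_left, ← ENNReal.tsum_mul_left]
        congr 1
        ext n
        rw [lintegral_const_mul' _ _ ENNReal.coe_ne_top]
        ring
    _ = ε * (2 * ENNReal.ofReal Cμ ^ 3 *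
          ∑' n : ℕ, ∫⁻ x in G, h x * (if (n : ℝ≥0∞) < k x then 1 else 0) ∂μ) := by
        congr 3
        ext n
        rw [inter_comm, ← Measure.restrict_restrict (hopen n).measurableSet,
          ← lintegral_indicator (hopen n).measurableSet]
        congr 1
        ext x
        by_cases hx : (n : ℝ≥0∞) < k x <;> simp [hx]
    _ = ε * (2 * ENNReal.ofReal Cμ ^ 3 *
          ∫⁻ x in G, h x * ∑' n : ℕ, (if (n : ℝ≥0∞) < k x then 1 else 0) ∂μ) := by
        have hmm : ∀ n : ℕ, AEMeasurable (fun x => h x * (if (n : ℝ≥0∞) < k x then 1 else 0))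
            (μ.restrict G) := fun n => (hhm.mul (Measurable.ite (hopen n).measurableSet
          measurable_const measurable_const)).aemeasurable
        rw [← lintegral_tsum hmm]
        simp only [ENNReal.tsum_mul_left]
    _ ≤ ε * (2 * ENNReal.ofReal Cμ ^ 3 * ∫⁻ x in G, h x * (k x + 1) ∂μ) := by
        gcongr with x
        exact tsum_indicator_le (k x)

end SurfMod

/-- If the path modulus vanishes, the dual surface modulus is infinite. -/
theorem surface_modulus_infinite_of_path_modulus_zero {X : Type*} [MetricSpace X]
    [MeasurableSpace X] [BorelSpace X] [CompleteSpace X] (μ : Measure X) (hBR : BorelRegular μ)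
    (Cμ : ℝ) (hCμ : 1 < Cμ) (hD : IsDoublingWith μ Cμ)
    (CP lP : ℝ) (hCP : 1 ≤ CP) (hlP : 1 ≤ lP) (hPI : WeakPoincare μ 1 CP lP)
    (p : ℝ) (hp : 1 < p) (G E F : Set X)
    (hG : IsDomainWithCompactClosure G) (hE : IsNondegContinuum E) (hF : IsNondegContinuum F)
    (hEG : E ⊆ G) (hFG : F ⊆ G) (hEF : Disjoint E F)
    (hmod : modulus μ p (pathFamily E F G) = 0) :
    surfModulus μ (p / (p - 1)) (surfaceSets μ E F G) G = ⊤ := by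
  have := SurfMod.isLocallyFinite hD
  have hGfin : μ G ≠ ⊤ :=
    ne_top_of_le_ne_top hG.2.2.measure_lt_top.ne (measure_mono subset_closure)
  have hpq : p.HolderConjugate (p / (p - 1)) := Real.HolderConjugate.conjExponent hp
  obtain ⟨D, hDEF, h, hlsc, hInt, hblow⟩ :=
    SurfMod.exists_polar hD hlP hPI hp hG hGfin hE.1 hEF hmod
  unfold surfModulus
  refine iInf_eq_top.2 fun g => iInf_eq_top.2 fun hg => ?_
  by_contra hfin
  have hgint : ∫⁻ x in G, g x ^ (p / (p - 1)) ∂μ ≠ ⊤ :=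
    ne_top_of_le_ne_top hfin (setLIntegral_le_lintegral _ _)
  rcases hDEF with rfl | rfl
  · exact SurfMod.final_core hD hpq hG hGfin hE.1 hF.1 hE.2.1 hF.2.1 hEG hFG hEF (fun S hS => hS)
      hlsc hInt hblow hg.1 hgint hg.2
  · exact SurfMod.final_core hD hpq hG hGfin hF.1 hE.1 hF.2.1 hE.2.1 hFG hEG hEF.symm
      (fun S hS => SurfMod.separatesIn_symm hS) hlsc hInt hblow hg.1 hgint hg.2
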